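/- arXiv:math/0609339 — 3 statements merged into one kernel-verified Lean document; each statement's English description precedes it below -/
import Mathlib

section
/- Let T and U be caterpillars, each with n vertices, such that in each of T and U every spine vertex is adjacent to at least one leaf, and no two distinct spine vertices are adjacent to the same number of leaves (the leaf numbers are strictly positive and pairwise distinct). If N_λ(T) = N_λ(U) for every partition λ of n (equivalently, X_T = X_U), then T and U are isomorphic as graphs. -/
open SimpleGraph Finset

variable {V : Type*} {W : Type*}

open Classical in
/-- `edgeSetType A` : the "type" of the edge set `A`, i.e. the partition (as a multiset of
positive integers) of `#V` whose parts are the orders of the connected components of the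
spanning subgraph `(V, A)`. -/
noncomputable def edgeSetType [Fintype V] (A : Finset (Sym2 V)) : Multiset ℕ :=
  ((Finset.univ : Finset V).image
    (fun v => (SimpleGraph.fromEdgeSet (↑A : Set (Sym2 V))).connectedComponentMk v)).val.map
    (fun c => c.supp.ncard)

open Classical in
/-- `cCoeff G λ = Σ_{A ⊆ E(G), type(A) = λ} (−1)^{#A}`, the coefficient of the power-sum
symmetric function `p_λ` in the chromatic symmetric function `X_G`. -/
noncomputable def cCoeff [Fintype V] (G : SimpleGraph V) (lam : Multiset ℕ) : ℤ :=
  ∑ A ∈ (Finset.univ : Finset (Sym2 V)).powerset,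
    if (↑A : Set (Sym2 V)) ⊆ G.edgeSet ∧ edgeSetType A = lam then (-1 : ℤ) ^ A.card else 0

open Classical in
/-- `NCoeff G λ` : the number of edge sets `A ⊆ E(G)` with `type(A) = λ`. -/
noncomputable def NCoeff [Fintype V] (G : SimpleGraph V) (lam : Multiset ℕ) : ℕ :=
  ((Finset.univ : Finset (Sym2 V)).powerset.filter
    (fun (A : Finset (Sym2 V)) => (↑A : Set (Sym2 V)) ⊆ G.edgeSet ∧ edgeSetType A = lam)).card

/-- A caterpillar is a tree in which the induced subgraph on the set of non-leaf vertices
(vertices of degree at least 2) is a nontrivial path, i.e. (being an induced subgraph of a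
tree, hence acyclic) it has at least two vertices, is connected, and all its vertices have at
most two neighbours in it.  This path is called the spine. -/
def IsCaterpillar [Fintype V] (T : SimpleGraph V) [DecidableRel T.Adj] : Prop :=
  T.IsTree ∧ 2 ≤ {v : V | 2 ≤ T.degree v}.ncard ∧
    (T.induce {v : V | 2 ≤ T.degree v}).Connected ∧
    ∀ w : {v : V | 2 ≤ T.degree v},
      ((T.induce {v : V | 2 ≤ T.degree v}).neighborSet w).ncard ≤ 2

/-- `leafNum T v` : the leaf number of a vertex `v`, i.e. the number of leaves of `T`
adjacent to `v`. -/
noncomputable def leafNum [Fintype V] (T : SimpleGraph V) [DecidableRel T.Adj] (v : V) : ℕ :=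
  {u : V | T.Adj v u ∧ T.degree u = 1}.ncard


section Helpers
open Classical

theorem aux_type_eq [Fintype V] (A : Finset (Sym2 V)) (f : V → V)
    (h : ∀ x y, (SimpleGraph.fromEdgeSet (↑A : Set (Sym2 V))).Reachable x y ↔ f x = f y) :
    edgeSetType A = ((Finset.univ : Finset V).image f).val.map
      (fun c => {x | f x = c}.ncard) := by
  set G := SimpleGraph.fromEdgeSet (↑A : Set (Sym2 V)) with hG
  let g : G.ConnectedComponent → V :=
    Quot.lift f (fun x y hxy => (h x y).1 hxy)
  have hgmk : ∀ x, g (G.connectedComponentMk x) = f x := fun x => rfl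
  have hinj : Function.Injective g := by
    intro a b
    induction a using SimpleGraph.ConnectedComponent.ind with | _ x
    induction b using SimpleGraph.ConnectedComponent.ind with | _ y
    intro hab
    exact SimpleGraph.ConnectedComponent.sound ((h x y).2 hab)
  have himg : (Finset.univ : Finset V).image f =
      ((Finset.univ : Finset V).image G.connectedComponentMk).image g := by
    rw [Finset.image_image]; rfl
  rw [himg, Finset.image_val_of_injOn (hinj.injOn), Multiset.map_map]
  unfold edgeSetType
  apply Multiset.map_congr rfl
  intro c _
  induction c using SimpleGraph.ConnectedComponent.ind with | _ x
  simp only [Function.comp, hgmk]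
  congr 1
  ext y
  simp only [SimpleGraph.ConnectedComponent.mem_supp_iff, SimpleGraph.ConnectedComponent.eq,
    Set.mem_ofPred_eq]
  exact h y x

theorem aux_card_lt [Fintype V] (T : SimpleGraph V) (hT : T.IsAcyclic) (A B : Finset (Sym2 V))
    (hB : (↑B : Set (Sym2 V)) ⊆ T.edgeSet) (hAB : A ⊂ B) :
    (edgeSetType B).card < (edgeSetType A).card := by
  obtain ⟨hsub, e, heB, heA⟩ := Finset.ssubset_iff_exists_cons_subset.1 hAB |> fun ⟨e, h1, h2⟩ =>
    (⟨hAB.1, e, h2 (by simp), h1⟩ : A ⊆ B ∧ ∃ e, e ∈ B ∧ e ∉ A)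
  have hle : SimpleGraph.fromEdgeSet (↑A : Set (Sym2 V)) ≤
      SimpleGraph.fromEdgeSet (↑B : Set (Sym2 V)) :=
    SimpleGraph.fromEdgeSet_mono (by exact_mod_cast hsub)
  have hcard : ∀ C : Finset (Sym2 V), (edgeSetType C).card =
      Fintype.card (SimpleGraph.fromEdgeSet (↑C : Set (Sym2 V))).ConnectedComponent := by
    intro C
    unfold edgeSetType
    rw [Multiset.card_map, Finset.card_val, ← Finset.card_univ]
    congr 1
    ext c
    induction c using SimpleGraph.ConnectedComponent.ind with | _ x
    simp only [Finset.mem_image, Finset.mem_univ, true_and, iff_true]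
    exact ⟨x, rfl⟩
  rw [hcard, hcard]
  apply Fintype.card_lt_of_surjective_not_injective _
    (SimpleGraph.ConnectedComponent.surjective_map_ofLE hle)
  intro hinj
  induction e using Sym2.ind with | _ x y
  have hadj : T.Adj x y := hB heB
  have hadjB : (SimpleGraph.fromEdgeSet (↑B : Set (Sym2 V))).Adj x y := by
    simp [SimpleGraph.fromEdgeSet_adj, heB, hadj.ne]
  have hr : (SimpleGraph.fromEdgeSet (↑A : Set (Sym2 V))).Reachable x y := by
    apply SimpleGraph.ConnectedComponent.exact
    apply hinj
    exact SimpleGraph.ConnectedComponent.sound hadjB.reachable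
  have hbr := (SimpleGraph.isAcyclic_iff_forall_adj_isBridge.1 hT) hadj
  rw [SimpleGraph.isBridge_iff] at hbr
  apply hbr
  refine hr.mono ?_
  intro a b hab
  rw [SimpleGraph.fromEdgeSet_adj] at hab
  rw [SimpleGraph.deleteEdges_adj]
  refine ⟨hB (hsub hab.1), ?_⟩
  intro hh
  apply heA
  rw [Set.mem_singleton_iff] at hh
  rw [← hh]
  exact hab.1

/-- Working data: spine predicate, root map and leaf numbers. -/
structure CatData [Fintype V] (T : SimpleGraph V) (sp : V → Prop) (r : V → V) (l : V → ℕ) :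
    Prop where
  acyc : T.IsAcyclic
  r_sp : ∀ v, sp (r v)
  r_self : ∀ v, sp v → r v = v
  r_adj : ∀ v, ¬ sp v → T.Adj v (r v)
  r_uniq : ∀ v w, ¬ sp v → T.Adj v w → w = r v
  l_eq : ∀ s, sp s → l s = {u | ¬ sp u ∧ r u = s}.ncard
  l_pos : ∀ s, sp s → 1 ≤ l s
  l_inj : ∀ s t, sp s → sp t → l s = l t → s = t

theorem aux_exists [Fintype V] (T : SimpleGraph V) [DecidableRel T.Adj]
    (hT : IsCaterpillar T)
    (hTpos : ∀ v : V, 2 ≤ T.degree v → 1 ≤ leafNum T v)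
    (hTdist : ∀ v w : V, 2 ≤ T.degree v → 2 ≤ T.degree w →
      leafNum T v = leafNum T w → v = w) :
    ∃ r, CatData T (fun v => 2 ≤ T.degree v) r (leafNum T) := by
  obtain ⟨htree, h2, -, -⟩ := hT
  have hconn := htree.1
  obtain ⟨s, t, hs, ht, hst⟩ : ∃ s t, 2 ≤ T.degree s ∧ 2 ≤ T.degree t ∧ s ≠ t := by
    obtain ⟨s, hs, t, ht, hst⟩ := (Set.one_lt_ncard (Set.toFinite _)).1 h2
    exact ⟨s, t, hs, ht, hst⟩
  have : Nontrivial V := ⟨s, t, hst⟩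
  have hpos : ∀ v, 0 < T.degree v := fun v => hconn.preconnected.degree_pos_of_nontrivial v
  have hone : ∀ v, ¬ 2 ≤ T.degree v → T.degree v = 1 := fun v hv => by
    have := hpos v; omega
  have hex : ∀ v, ∃ w, ¬ 2 ≤ T.degree v → (T.Adj v w ∧ ∀ w', T.Adj v w' → w' = w) := by
    intro v
    by_cases hv : 2 ≤ T.degree v
    · exact ⟨v, fun h => absurd hv h⟩
    · obtain ⟨w, hw, hu⟩ := SimpleGraph.degree_eq_one_iff_existsUnique_adj.1 (hone v hv)
      exact ⟨w, fun _ => ⟨hw, hu⟩⟩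
  choose nb hnb using hex
  have hnbsp : ∀ v, ¬ 2 ≤ T.degree v → 2 ≤ T.degree (nb v) := by
    intro v hv
    by_contra hw
    obtain ⟨hvw, hvu⟩ := hnb v hv
    obtain ⟨hwx, hwu⟩ := hnb _ hw
    have hwv := hwu v hvw.symm
    have key : ∀ x, Relation.ReflTransGen T.Adj v x → x = v ∨ x = nb v := by
      intro x hx
      induction hx with
      | refl => left; rfl
      | tail _ hab ih =>
        rcases ih with rfl | rfl
        · right; exact hvu _ hab
        · left; rw [hwv]; exact hwu _ hab
    rcases key s ((T.reachable_iff_reflTransGen v s).1 (hconn.preconnected v s)) with h | h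
    · exact hv (h ▸ hs)
    · exact hw (h ▸ hs)
  refine ⟨fun v => if 2 ≤ T.degree v then v else nb v, htree.2, ?_, ?_, ?_, ?_, ?_, hTpos, hTdist⟩
  · intro v
    by_cases hv : 2 ≤ T.degree v
    · beta_reduce; rw [if_pos hv]; exact hv
    · beta_reduce; rw [if_neg hv]; exact hnbsp v hv
  · intro v hv; simp [hv]
  · intro v hv; simpa [hv] using (hnb v hv).1
  · intro v w hv hw; simpa [hv] using (hnb v hv).2 w hw
  · intro x hx
    unfold leafNum
    congr 1
    ext u
    simp only [Set.mem_ofPred_eq]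
    constructor
    · rintro ⟨h1, h2⟩
      have hu : ¬ 2 ≤ T.degree u := by omega
      refine ⟨hu, ?_⟩
      simp only [hu, if_false]
      exact ((hnb u hu).2 x h1.symm).symm
    · rintro ⟨hu, h2⟩
      simp only [hu, if_false] at h2
      subst h2
      exact ⟨(hnb u hu).1.symm, hone u hu⟩

/-- The set of pendant edges. -/
noncomputable def pend [Fintype V] (T : SimpleGraph V) (sp : V → Prop) : Finset (Sym2 V) :=
  Finset.univ.filter (fun e => e ∈ T.edgeSet ∧ ∃ v ∈ e, ¬ sp v)

section CD
variable [Fintype V] {T : SimpleGraph V} {sp : V → Prop} {r : V → V} {l : V → ℕ}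

theorem mem_pend (x y : V) : s(x, y) ∈ pend T sp ↔ T.Adj x y ∧ (¬ sp x ∨ ¬ sp y) := by
  simp [pend]

theorem pend_sub : (↑(pend T sp) : Set (Sym2 V)) ⊆ T.edgeSet := by
  intro e he
  simp only [pend, Finset.coe_filter, Set.mem_ofPred_eq] at he
  exact he.2.1

theorem CatData.adj_root (h : CatData T sp r l) {x y : V} (hxy : s(x, y) ∈ pend T sp) :
    r x = r y := by
  rw [mem_pend] at hxy
  obtain ⟨hadj, hx | hy⟩ := hxy
  · have h1 := h.r_uniq x y hx hadj
    rw [h1, h.r_self _ (h.r_sp x)]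
  · have h1 := h.r_uniq y x hy hadj.symm
    rw [h1, h.r_self _ (h.r_sp y)]

theorem CatData.reach_root (h : CatData T sp r l) (A : Finset (Sym2 V)) (hA : pend T sp ⊆ A)
    (x : V) : (SimpleGraph.fromEdgeSet (↑A : Set (Sym2 V))).Reachable x (r x) := by
  by_cases hx : sp x
  · rw [h.r_self x hx]
  · apply SimpleGraph.Adj.reachable
    have := h.r_adj x hx
    rw [SimpleGraph.fromEdgeSet_adj]
    exact ⟨hA ((mem_pend _ _).2 ⟨this, Or.inl hx⟩), this.ne⟩

theorem aux_reach_const (A : Finset (Sym2 V)) (f : V → V)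
    (hf : ∀ x y, s(x, y) ∈ A → f x = f y) {x y : V}
    (hxy : (SimpleGraph.fromEdgeSet (↑A : Set (Sym2 V))).Reachable x y) : f x = f y := by
  rw [SimpleGraph.reachable_iff_reflTransGen] at hxy
  induction hxy with
  | refl => rfl
  | tail _ hab ih =>
    rw [SimpleGraph.fromEdgeSet_adj] at hab
    exact ih.trans (hf _ _ hab.1)

theorem CatData.fiber (h : CatData T sp r l) (c : V) (hc : sp c) :
    {x | r x = c}.ncard = l c + 1 := by
  rw [h.l_eq c hc, ← Set.ncard_insert_of_notMem (a := c)]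
  · congr 1
    ext x
    simp only [Set.mem_ofPred_eq, Set.mem_insert_iff]
    constructor
    · intro hx
      by_cases hs : sp x
      · left; rw [← hx, h.r_self x hs]
      · right; exact ⟨hs, hx⟩
    · rintro (rfl | hx)
      · exact h.r_self _ hc
      · exact hx.2
  · simp [hc]

theorem CatData.type_pend (h : CatData T sp r l) :
    edgeSetType (pend T sp) =
      ((Finset.univ : Finset V).filter sp).val.map (fun c => l c + 1) := by
  rw [aux_type_eq (pend T sp) r]
  · have : (Finset.univ : Finset V).image r = Finset.univ.filter sp := by
      ext c
      simp only [Finset.mem_image, Finset.mem_univ, true_and, Finset.mem_filter]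
      constructor
      · rintro ⟨x, rfl⟩; exact h.r_sp x
      · intro hc; exact ⟨c, h.r_self c hc⟩
    rw [this]
    apply Multiset.map_congr rfl
    intro c hc
    exact h.fiber c (by simpa using hc)
  · intro x y
    constructor
    · exact aux_reach_const _ _ (fun x y hxy => h.adj_root hxy)
    · intro hxy
      have h1 := h.reach_root _ (Finset.Subset.refl _) x
      have h2 := h.reach_root _ (Finset.Subset.refl _) y
      rw [← hxy] at h2
      exact h1.trans h2.symm

theorem CatData.type_insert (h : CatData T sp r l) (v w : V) (hv : sp v) (hw : sp w)
    (hvw : T.Adj v w) :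
    edgeSetType (insert s(v, w) (pend T sp)) + {l v + 1, l w + 1} =
      edgeSetType (pend T sp) + {(l v + 1) + (l w + 1)} := by
  have hne : v ≠ w := hvw.ne
  have hrv := h.r_self v hv
  have hrw := h.r_self w hw
  have hsub : pend T sp ⊆ insert s(v, w) (pend T sp) := Finset.subset_insert _ _
  let f : V → V := fun x => if r x = w then v else r x
  rw [aux_type_eq (insert s(v, w) (pend T sp)) f, h.type_pend]
  · set S := (Finset.univ : Finset V).filter sp with hS
    have himg : (Finset.univ : Finset V).image f = S.erase w := by
      ext c
      simp only [Finset.mem_image, Finset.mem_univ, true_and, Finset.mem_erase, hS,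
        Finset.mem_filter, f]
      constructor
      · rintro ⟨x, rfl⟩
        split_ifs with hx
        · exact ⟨hne, hv⟩
        · exact ⟨hx, h.r_sp x⟩
      · rintro ⟨hcw, hc⟩
        refine ⟨c, ?_⟩
        rw [h.r_self c hc, if_neg hcw]
    rw [himg]
    have hwS : w ∈ S := by simp [hS, hw]
    have hvS : v ∈ S.erase w := by simp [hS, hv, hne]
    have e1 : S.val = w ::ₘ v ::ₘ ((S.erase w).erase v).val := by
      conv_lhs => rw [← Finset.insert_erase hwS, ← Finset.insert_erase hvS]
      rw [Finset.insert_val_of_notMem (by simp [hne.symm]),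
        Finset.insert_val_of_notMem (by simp)]
    have e2 : (S.erase w).val = v ::ₘ ((S.erase w).erase v).val := by
      conv_lhs => rw [← Finset.insert_erase hvS]
      rw [Finset.insert_val_of_notMem (by simp)]
    have e3 : ((S.erase w).erase v).val.map (fun c => {x | f x = c}.ncard) =
        ((S.erase w).erase v).val.map (fun c => l c + 1) := by
      apply Multiset.map_congr rfl
      intro c hc
      have hc' : c ≠ v ∧ c ≠ w ∧ sp c := by
        rw [Finset.mem_val, Finset.mem_erase, Finset.mem_erase, hS, Finset.mem_filter] at hc
        exact ⟨hc.1, hc.2.1, hc.2.2.2⟩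
      rw [← h.fiber c hc'.2.2]
      congr 1
      ext x
      simp only [Set.mem_ofPred_eq, f]
      split_ifs with hx
      · constructor
        · intro h1; exact absurd h1.symm hc'.1
        · intro h1; exact absurd (h1.symm.trans hx) hc'.2.1
      · rfl
    have e4 : {x | f x = v}.ncard = (l v + 1) + (l w + 1) := by
      rw [← h.fiber v hv, ← h.fiber w hw, ← Set.ncard_union_eq _ (Set.toFinite _) (Set.toFinite _)]
      · congr 1
        ext x
        simp only [Set.mem_ofPred_eq, f, Set.mem_union]
        split_ifs with hx
        · simp [hx]
        · simp [hx]
      · rw [Set.disjoint_left]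
        intro x hx hx'
        exact hne (hx.symm.trans hx')
    rw [e2, e1, Multiset.map_cons, Multiset.map_cons, Multiset.map_cons, e3, e4]
    generalize ((S.erase w).erase v).val.map (fun c => l c + 1) = R
    ext a
    simp only [Multiset.insert_eq_cons, Multiset.count_add, Multiset.count_cons,
      Multiset.count_singleton]
    omega
  · intro x y
    constructor
    · apply aux_reach_const
      intro x y hxy
      rw [Finset.mem_insert] at hxy
      rcases hxy with hxy | hxy
      · rw [Sym2.eq_iff] at hxy
        rcases hxy with ⟨rfl, rfl⟩ | ⟨rfl, rfl⟩
        · simp [f, hrv, hrw]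
        · simp [f, hrv, hrw]
      · simp only [f, h.adj_root hxy]
    · have key : ∀ x, (SimpleGraph.fromEdgeSet
          (↑(insert s(v, w) (pend T sp)) : Set (Sym2 V))).Reachable x (f x) := by
        intro x
        have h1 := h.reach_root _ hsub x
        simp only [f]
        split_ifs with hx
        · rw [hx] at h1
          refine h1.trans (SimpleGraph.Adj.reachable ?_).symm
          rw [SimpleGraph.fromEdgeSet_adj]
          exact ⟨by simp, hne⟩
        · exact h1
      intro hxy
      have h2 := key y
      rw [← hxy] at h2
      exact (key x).trans h2.symm


theorem aux_superset (h : CatData T sp r l) (A : Finset (Sym2 V))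
    (hA : (↑A : Set (Sym2 V)) ⊆ T.edgeSet)
    (hA1 : 1 ∉ edgeSetType A) : pend T sp ⊆ A := by
  have main : ∀ x y, T.Adj x y → ¬ sp x → s(x, y) ∈ A := by
    intro x y hxy hx
    by_contra hn
    apply hA1
    unfold edgeSetType
    rw [Multiset.mem_map]
    refine ⟨(SimpleGraph.fromEdgeSet (↑A : Set (Sym2 V))).connectedComponentMk x,
      Finset.mem_image_of_mem _ (Finset.mem_univ x), ?_⟩
    rw [Set.ncard_eq_one]
    refine ⟨x, ?_⟩
    ext z
    rw [SimpleGraph.ConnectedComponent.mem_supp_iff, SimpleGraph.ConnectedComponent.eq,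
      Set.mem_singleton_iff]
    constructor
    · intro hz
      replace hz := (SimpleGraph.reachable_iff_reflTransGen _ _).1 hz.symm
      induction hz with
      | refl => rfl
      | tail _ hab ih =>
        subst ih
        rw [SimpleGraph.fromEdgeSet_adj] at hab
        have h1 := h.r_uniq _ _ hx (hA hab.1)
        have h2 := h.r_uniq _ _ hx hxy
        exact absurd (h1.trans h2.symm ▸ hab.1) hn
    · rintro rfl; rfl
  intro e he
  induction e using Sym2.ind with | _ x y
  rw [mem_pend] at he
  obtain ⟨hxy, hx | hy⟩ := he
  · exact main x y hxy hx
  · rw [Sym2.eq_swap]; exact main y x hxy.symm hy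

theorem aux_sum (A : Finset (Sym2 V)) : (edgeSetType A).sum = Fintype.card V := by
  unfold edgeSetType
  rw [← Finset.card_univ, Finset.card_eq_sum_card_image
    (fun v => (SimpleGraph.fromEdgeSet (↑A : Set (Sym2 V))).connectedComponentMk v)]
  apply Finset.sum_congr rfl
  intro c _
  rw [← Set.ncard_coe_finset]
  congr 1
  ext x
  simp

theorem aux_parts_pos (A : Finset (Sym2 V)) : ∀ m ∈ edgeSetType A, 0 < m := by
  intro m hm
  unfold edgeSetType at hm
  rw [Multiset.mem_map] at hm
  obtain ⟨c, -, rfl⟩ := hm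
  rw [Set.ncard_pos (Set.toFinite _)]
  exact c.nonempty_supp

theorem CatData.mem_type (h : CatData T sp r l) (m : ℕ) :
    m ∈ edgeSetType (pend T sp) ↔ ∃ s, sp s ∧ l s + 1 = m := by
  rw [h.type_pend]
  simp

theorem CatData.one_notMem (h : CatData T sp r l) : 1 ∉ edgeSetType (pend T sp) := by
  rw [h.mem_type]
  rintro ⟨s, hs, h1⟩
  have := h.l_pos s hs
  omega

theorem CatData.one_notMem_insert (h : CatData T sp r l) (v w : V) (hv : sp v) (hw : sp w)
    (hvw : T.Adj v w) : 1 ∉ edgeSetType (insert s(v, w) (pend T sp)) := by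
  intro h1
  have h2 : 1 ∈ edgeSetType (pend T sp) + {(l v + 1) + (l w + 1)} := by
    rw [← h.type_insert v w hv hw hvw]
    exact Multiset.mem_add.2 (Or.inl h1)
  rw [Multiset.mem_add, Multiset.mem_singleton] at h2
  rcases h2 with h2 | h2
  · exact h.one_notMem h2
  · omega

theorem CatData.insert_sub (v w : V) (hvw : T.Adj v w) :
    (↑(insert s(v, w) (pend T sp)) : Set (Sym2 V)) ⊆ T.edgeSet := by
  rw [Finset.coe_insert]
  exact Set.insert_subset hvw pend_sub

theorem CatData.card_insert (h : CatData T sp r l) (v w : V) (hv : sp v) (hw : sp w)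
    (hvw : T.Adj v w) : (edgeSetType (insert s(v, w) (pend T sp))).card + 1 =
      (edgeSetType (pend T sp)).card := by
  have := congrArg Multiset.card (h.type_insert v w hv hw hvw)
  simp at this
  omega

theorem CatData.fiber_card (h : CatData T sp r l) (m : ℕ) (P : Prop) :
    {a | ((l (r a), sp a) : ℕ × Prop) = (m, P)}.ncard =
      if m + 1 ∈ edgeSetType (pend T sp) then (if P then 1 else m) else 0 := by
  simp only [h.mem_type]
  split_ifs with h1 h2
  · obtain ⟨s, hs, hm⟩ := h1
    rw [Set.ncard_eq_one]
    refine ⟨s, ?_⟩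
    ext x
    simp only [Set.mem_ofPred_eq, Prod.mk.injEq, Set.mem_singleton_iff, h2, eq_iff_iff, iff_true]
    constructor
    · rintro ⟨h3, h4⟩
      rw [h.r_self x h4] at h3
      exact h.l_inj _ _ h4 hs (by omega)
    · rintro rfl
      rw [h.r_self _ hs]
      exact ⟨by omega, hs⟩
  · obtain ⟨s, hs, hm⟩ := h1
    have : l s = m := by omega
    rw [← this, h.l_eq s hs]
    congr 1
    ext x
    simp only [Set.mem_ofPred_eq, Prod.mk.injEq, h2, eq_iff_iff, iff_false]
    rw [← h.l_eq s hs]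
    constructor
    · rintro ⟨h3, h4⟩
      exact ⟨h4, h.l_inj _ _ (h.r_sp x) hs h3⟩
    · rintro ⟨h3, h4⟩
      exact ⟨by rw [h4], h3⟩
  · rw [Set.ncard_eq_zero (Set.toFinite _), Set.eq_empty_iff_forall_notMem]
    intro x hx
    simp only [Set.mem_ofPred_eq, Prod.mk.injEq] at hx
    exact h1 ⟨r x, h.r_sp x, by omega⟩

theorem CatData.adj_iff (h : CatData T sp r l) (u v : V) :
    T.Adj u v ↔ (sp u ∧ sp v ∧ ∃ x y, sp x ∧ sp y ∧ T.Adj x y ∧ l x = l (r u) ∧ l y = l (r v)) ∨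
      (¬ (sp u ↔ sp v) ∧ l (r u) = l (r v)) := by
  by_cases hu : sp u <;> by_cases hv : sp v
  · simp only [hu, hv, true_and, not_true_eq_false, false_and, or_false]
    rw [h.r_self u hu, h.r_self v hv]
    constructor
    · intro huv; exact ⟨u, v, hu, hv, huv, rfl, rfl⟩
    · rintro ⟨x, y, hx, hy, hxy, h1, h2⟩
      rw [← h.l_inj _ _ hx hu h1, ← h.l_inj _ _ hy hv h2]; exact hxy
  · simp only [hu, hv, true_and, false_and, iff_false, not_true_eq_false, not_false_eq_true,
      false_or]
    rw [h.r_self u hu]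
    constructor
    · intro huv; rw [← h.r_uniq v u hv huv.symm]
    · intro hl
      rw [h.l_inj _ _ hu (h.r_sp v) hl]
      exact (h.r_adj v hv).symm
  · simp only [hu, hv, false_and, iff_true, not_false_eq_true, true_and,
      false_or]
    rw [h.r_self v hv]
    constructor
    · intro huv; rw [← h.r_uniq u v hu huv]
    · intro hl
      rw [← h.l_inj _ _ (h.r_sp u) hv hl]
      exact h.r_adj u hu
  · simp only [hu, hv, false_and, not_true_eq_false, or_false, iff_false]
    intro huv
    apply hv
    rw [h.r_uniq u v hu huv]
    exact h.r_sp u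
end CD

section Two
variable [Fintype V] {T : SimpleGraph V} {sp : V → Prop} {r : V → V} {l : V → ℕ}
variable [Fintype W] {U : SimpleGraph W} {sp' : W → Prop} {r' : W → W} {l' : W → ℕ}

theorem aux_transfer (hc : Fintype.card V = Fintype.card W)
    (hN : ∀ lam : Multiset ℕ, lam.sum = Fintype.card V → (∀ m ∈ lam, 0 < m) →
      NCoeff T lam = NCoeff U lam) (A : Finset (Sym2 V)) (hA : (↑A : Set (Sym2 V)) ⊆ T.edgeSet) :
    ∃ B : Finset (Sym2 W), (↑B : Set (Sym2 W)) ⊆ U.edgeSet ∧ edgeSetType B = edgeSetType A := by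
  have h1 := hN (edgeSetType A) (aux_sum A) (aux_parts_pos A)
  have h2 : 0 < NCoeff T (edgeSetType A) := by
    unfold NCoeff
    rw [Finset.card_pos]
    exact ⟨A, by simp [hA]⟩
  rw [h1] at h2
  unfold NCoeff at h2
  rw [Finset.card_pos] at h2
  obtain ⟨B, hB⟩ := h2
  rw [Finset.mem_filter] at hB
  exact ⟨B, hB.2⟩

theorem aux_eq_of_card (hU : CatData U sp' r' l') (A B : Finset (Sym2 W)) (hAB : A ⊆ B)
    (hB : (↑B : Set (Sym2 W)) ⊆ U.edgeSet)
    (hcard : (edgeSetType A).card ≤ (edgeSetType B).card) : A = B := by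
  by_contra hne
  have := aux_card_lt U hU.acyc A B hB (hAB.ssubset_of_ne hne)
  omega

theorem aux_card_le (hT : CatData T sp r l) (hU : CatData U sp' r' l')
    (tr : ∀ A : Finset (Sym2 V), (↑A : Set (Sym2 V)) ⊆ T.edgeSet →
      ∃ B : Finset (Sym2 W), (↑B : Set (Sym2 W)) ⊆ U.edgeSet ∧ edgeSetType B = edgeSetType A) :
    (edgeSetType (pend T sp)).card ≤ (edgeSetType (pend U sp')).card := by
  obtain ⟨B, hB, hBt⟩ := tr _ (pend_sub (T := T) (sp := sp))
  have hsup := aux_superset hU B hB (hBt ▸ hT.one_notMem)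
  rw [← hBt]
  by_contra hlt
  have := aux_eq_of_card hU _ B hsup hB (by omega)
  rw [this] at hlt
  omega

theorem aux_same (hT : CatData T sp r l) (hU : CatData U sp' r' l')
    (tr : ∀ A : Finset (Sym2 V), (↑A : Set (Sym2 V)) ⊆ T.edgeSet →
      ∃ B : Finset (Sym2 W), (↑B : Set (Sym2 W)) ⊆ U.edgeSet ∧ edgeSetType B = edgeSetType A)
    (hle : (edgeSetType (pend U sp')).card ≤ (edgeSetType (pend T sp)).card) :
    edgeSetType (pend T sp) = edgeSetType (pend U sp') := by
  obtain ⟨B, hB, hBt⟩ := tr _ (pend_sub (T := T) (sp := sp))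
  have hsup := aux_superset hU B hB (hBt ▸ hT.one_notMem)
  rw [aux_eq_of_card hU _ B hsup hB (by rw [hBt]; exact hle), hBt]

theorem aux_multiset (L M : Multiset ℕ) (p q p' q' : ℕ) (hp : 0 < p) (hq : 0 < q) (hpq : p ≠ q)
    (h1 : L + {p, q} = M + {p + q}) (h2 : L + {p', q'} = M + {p' + q'}) :
    (p = p' ∧ q = q') ∨ (p = q' ∧ q = p') := by
  have h3 : ({p, q} + {p' + q'} : Multiset ℕ) = {p', q'} + {p + q} := by
    apply add_left_cancel (a := L + M)
    calc L + M + ({p, q} + {p' + q'}) = (L + {p, q}) + (M + {p' + q'}) := by abel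
      _ = (M + {p + q}) + (L + {p', q'}) := by rw [h1, h2]
      _ = _ := by abel
  have m1 : p ∈ ({p', q'} + {p + q} : Multiset ℕ) := by rw [← h3]; simp
  have m2 : q ∈ ({p', q'} + {p + q} : Multiset ℕ) := by rw [← h3]; simp
  simp at m1 m2
  omega

theorem aux_edges (hT : CatData T sp r l) (hU : CatData U sp' r' l')
    (tr : ∀ A : Finset (Sym2 V), (↑A : Set (Sym2 V)) ⊆ T.edgeSet →
      ∃ B : Finset (Sym2 W), (↑B : Set (Sym2 W)) ⊆ U.edgeSet ∧ edgeSetType B = edgeSetType A)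
    (hsame : edgeSetType (pend T sp) = edgeSetType (pend U sp'))
    (m k : ℕ) (hex : ∃ x y, sp x ∧ sp y ∧ T.Adj x y ∧ l x = m ∧ l y = k) :
    ∃ x y, sp' x ∧ sp' y ∧ U.Adj x y ∧ l' x = m ∧ l' y = k := by
  obtain ⟨v, w, hv, hw, hvw, rfl, rfl⟩ := hex
  obtain ⟨B, hB, hBt⟩ := tr _ (CatData.insert_sub (sp := sp) v w hvw)
  have hsup := aux_superset hU B hB (hBt ▸ hT.one_notMem_insert v w hv hw hvw)
  have hcT := hT.card_insert v w hv hw hvw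
  have hne : pend U sp' ≠ B := by
    rintro rfl
    rw [← hBt, hsame] at hcT
    omega
  obtain ⟨e, he, heB⟩ := Finset.ssubset_iff_exists_cons_subset.1 (hsup.ssubset_of_ne hne)
  rw [Finset.cons_eq_insert] at heB
  have heU : e ∈ U.edgeSet := hB (heB (Finset.mem_insert_self _ _))
  induction e using Sym2.ind with | _ x y
  have hxy : U.Adj x y := heU
  have hspx : sp' x ∧ sp' y := by
    by_contra hcon
    apply he
    rw [mem_pend]
    exact ⟨hxy, by tauto⟩
  have hcU := hU.card_insert x y hspx.1 hspx.2 hxy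
  have heq := aux_eq_of_card hU _ B heB hB (by rw [hBt]; rw [hsame] at hcT; omega)
  have t1 := hT.type_insert v w hv hw hvw
  have t2 := hU.type_insert x y hspx.1 hspx.2 hxy
  rw [heq, hBt, ← hsame] at t2
  have hlne : l v + 1 ≠ l w + 1 := fun hh => hvw.ne (hT.l_inj _ _ hv hw (by omega))
  rcases aux_multiset _ _ _ _ _ _ (by omega) (by omega) hlne t1 t2 with h | h
  · exact ⟨x, y, hspx.1, hspx.2, hxy, by omega, by omega⟩
  · exact ⟨y, x, hspx.2, hspx.1, hxy.symm, by omega, by omega⟩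

theorem aux_iso (hT : CatData T sp r l) (hU : CatData U sp' r' l')
    (hsame : edgeSetType (pend T sp) = edgeSetType (pend U sp'))
    (hE : ∀ m k : ℕ, (∃ x y, sp x ∧ sp y ∧ T.Adj x y ∧ l x = m ∧ l y = k) ↔
      ∃ x y, sp' x ∧ sp' y ∧ U.Adj x y ∧ l' x = m ∧ l' y = k) : Nonempty (T ≃g U) := by
  let f : V → ℕ × Prop := fun a => (l (r a), sp a)
  let g : W → ℕ × Prop := fun a => (l' (r' a), sp' a)
  have hfib : ∀ c : ℕ × Prop, Nonempty ({a // f a = c} ≃ {b // g b = c}) := by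
    rintro ⟨m, P⟩
    refine Fintype.card_eq.1 ?_
    rw [← Nat.card_eq_fintype_card, ← Nat.card_eq_fintype_card]
    have h1 := hT.fiber_card m P
    rw [hsame, ← hU.fiber_card m P] at h1
    exact h1
  have e := fun c => (hfib c).some
  let E : V ≃ W := Equiv.ofFiberEquiv e
  have hEq : ∀ a, g (E a) = f a := fun a => Equiv.ofFiberEquiv_map e a
  refine ⟨⟨E, ?_⟩⟩
  intro a b
  rw [hT.adj_iff a b, hU.adj_iff (E a) (E b)]
  have ha := Prod.ext_iff.1 (hEq a)
  have hb := Prod.ext_iff.1 (hEq b)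
  simp only [f, g] at ha hb
  rw [ha.1, ha.2, hb.1, hb.2, hE]
end Two
end Helpers

/-- Let `T` and `U` be caterpillars, each with `n` vertices, in which every spine vertex
(vertex of degree ≥ 2) is adjacent to at least one leaf, and no two distinct spine vertices
have the same leaf number.  If `N_λ(T) = N_λ(U)` for every partition `λ` of `n`
(equivalently, `X_T = X_U`), then `T` and `U` are isomorphic. -/
theorem stmt_17 [Fintype V] [Fintype W] (T : SimpleGraph V) (U : SimpleGraph W)
    [DecidableRel T.Adj] [DecidableRel U.Adj]
    (hT : IsCaterpillar T) (hU : IsCaterpillar U) (n : ℕ)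
    (hVn : Fintype.card V = n) (hWn : Fintype.card W = n)
    (hTpos : ∀ v : V, 2 ≤ T.degree v → 1 ≤ leafNum T v)
    (hTdist : ∀ v w : V, 2 ≤ T.degree v → 2 ≤ T.degree w →
      leafNum T v = leafNum T w → v = w)
    (hUpos : ∀ v : W, 2 ≤ U.degree v → 1 ≤ leafNum U v)
    (hUdist : ∀ v w : W, 2 ≤ U.degree v → 2 ≤ U.degree w →
      leafNum U v = leafNum U w → v = w)
    (hN : ∀ lam : Multiset ℕ, lam.sum = n → (∀ m ∈ lam, 0 < m) →
      NCoeff T lam = NCoeff U lam) :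
    Nonempty (T ≃g U) := by
  obtain ⟨r, h⟩ := aux_exists T hT hTpos hTdist
  obtain ⟨r', h'⟩ := aux_exists U hU hUpos hUdist
  have tr := aux_transfer (T := T) (U := U) (hVn.trans hWn.symm)
    (fun lam hs hp => hN lam (hs.trans hVn) hp)
  have tr' := aux_transfer (T := U) (U := T) (hWn.trans hVn.symm)
    (fun lam hs hp => (hN lam (hs.trans hWn) hp).symm)
  have hsame := aux_same h h' tr (aux_card_le h' h tr')
  exact aux_iso h h' hsame (fun m k =>
    ⟨aux_edges h h' tr hsame m k, aux_edges h' h tr' hsame.symm m k⟩)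
end

section
/- Let G and H be squids, i.e., finite connected simple graphs each containing exactly one cycle (equivalently, connected with as many edges as vertices) and each having exactly one vertex of degree greater than 2. Suppose G and H have equal chromatic symmetric functions: for every finitely supported function α : ℕ → ℕ, the number of proper colorings κ : V(G) → ℕ with #κ⁻¹({i}) = α(i) for all i equals the number of proper colorings κ : V(H) → ℕ with #κ⁻¹({i}) = α(i) for all i. Then G and H are isomorphic as graphs. -/
open SimpleGraph Finset

variable {V : Type*} {W : Type*}

/-- Two finite simple graphs have equal chromatic symmetric functions iff for every finitely
supported `α : ℕ → ℕ`, they have the same number of proper colorings `κ : V → ℕ` whose color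
class `κ⁻¹({i})` has exactly `α i` elements, for all `i`. -/
def SameCSF [Fintype V] [Fintype W] (G : SimpleGraph V) (H : SimpleGraph W) : Prop :=
  ∀ α : ℕ →₀ ℕ,
    Nat.card {κ : V → ℕ // (∀ u w : V, G.Adj u w → κ u ≠ κ w) ∧
        ∀ i : ℕ, (κ ⁻¹' {i}).ncard = α i} =
      Nat.card {κ : W → ℕ // (∀ u w : W, H.Adj u w → κ u ≠ κ w) ∧
        ∀ i : ℕ, (κ ⁻¹' {i}).ncard = α i}

/-- A squid: a finite connected simple graph containing exactly one cycle (equivalently,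
connected with as many edges as vertices) having exactly one vertex of degree greater
than 2. -/
def IsSquid [Fintype V] (G : SimpleGraph V) [DecidableRel G.Adj] : Prop :=
  G.Connected ∧ Nat.card G.edgeSet = Fintype.card V ∧ ∃! v : V, 2 < G.degree v


namespace Sq
section Rec
variable {R : Type*} [CommRing R]

/-- transfer numbers for a leg of given length, root of type one / two -/
def TT (x y t : R) : ℕ → R × R
  | 0 => (1, 1)
  | l + 1 => (t * (x - 1) * (TT x y t l).1 + y * (TT x y t l).2,
      t * x * (TT x y t l).1 + (y - 1) * (TT x y t l).2)

def DD (x y t : R) : ℕ → R × R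
  | 0 => (0, 0)
  | l + 1 => ((TT x y t (l+1)).1 - t * (DD x y t l).1, (TT x y t (l+1)).2 - (DD x y t l).2)

def FF (x y t : R) (l : ℕ) {N : ℕ} (ls : Fin N → ℕ) : R :=
  t * x * ((DD x y t l).1 * ∏ i, (TT x y t (ls i)).1) +
    y * ((DD x y t l).2 * ∏ i, (TT x y t (ls i)).2)

variable {S : Type*} [CommRing S]

lemma TT_map (f : R →+* S) (x y t : R) (l : ℕ) :
    f (TT x y t l).1 = (TT (f x) (f y) (f t) l).1 ∧
    f (TT x y t l).2 = (TT (f x) (f y) (f t) l).2 := by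
  induction l with
  | zero => simp [TT]
  | succ l ih => simp [TT, ih.1, ih.2]

lemma DD_map (f : R →+* S) (x y t : R) (l : ℕ) :
    f (DD x y t l).1 = (DD (f x) (f y) (f t) l).1 ∧
    f (DD x y t l).2 = (DD (f x) (f y) (f t) l).2 := by
  induction l with
  | zero => simp [DD]
  | succ l ih => simp [DD, ih.1, ih.2, TT_map]

lemma FF_map (f : R →+* S) (x y t : R) (l : ℕ) {N : ℕ} (ls : Fin N → ℕ) :
    f (FF x y t l ls) = FF (f x) (f y) (f t) l ls := by
  simp [FF, TT_map, DD_map, map_prod]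

/-- From equality at naturals to equality in every rational algebra. -/
lemma FF_transfer {N N' : ℕ} (l l' : ℕ) (ls : Fin N → ℕ) (ls' : Fin N' → ℕ) (t : ℚ)
    (h : ∀ x y : ℕ, FF (x : ℚ) (y : ℚ) t l ls = FF (x : ℚ) (y : ℚ) t l' ls')
    [Algebra ℚ R] (x y : R) :
    FF x y (algebraMap ℚ R t) l ls = FF x y (algebraMap ℚ R t) l' ls' := by
  classical
  have inf : Set.Infinite (Set.range (fun n : ℕ => (n : ℚ))) :=
    Set.infinite_range_of_injective Nat.cast_injective
  have inf2 : Set.Infinite (Set.range (fun n : ℕ => (Polynomial.C (n : ℚ)))) :=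
    Set.infinite_range_of_injective (Polynomial.C_injective.comp Nat.cast_injective)
  have key : FF (Polynomial.C Polynomial.X : Polynomial (Polynomial ℚ)) Polynomial.X
      (Polynomial.C (Polynomial.C t)) l ls = FF (Polynomial.C Polynomial.X) Polynomial.X
      (Polynomial.C (Polynomial.C t)) l' ls' := by
    apply Polynomial.eq_of_infinite_eval_eq
    apply inf2.mono
    rintro _ ⟨b, rfl⟩
    apply Polynomial.eq_of_infinite_eval_eq
    apply inf.mono
    rintro _ ⟨a, rfl⟩
    have e1 := FF_map ((Polynomial.evalRingHom (a : ℚ)).comp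
      (Polynomial.evalRingHom (Polynomial.C (b : ℚ)))) (Polynomial.C Polynomial.X) Polynomial.X
      (Polynomial.C (Polynomial.C t)) l ls
    have e2 := FF_map ((Polynomial.evalRingHom (a : ℚ)).comp
      (Polynomial.evalRingHom (Polynomial.C (b : ℚ)))) (Polynomial.C Polynomial.X) Polynomial.X
      (Polynomial.C (Polynomial.C t)) l' ls'
    simp at e1 e2
    have hb : Polynomial.C (b : ℚ) = (b : Polynomial ℚ) := by simp
    simp only [Set.mem_ofPred_eq, hb]
    rw [e1, e2]
    exact h a b
  have := congrArg (Polynomial.eval₂RingHom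
    (Polynomial.eval₂RingHom (algebraMap ℚ R) x) y) key
  rw [FF_map, FF_map] at this
  simpa using this

end Rec

section Dual
variable {R : Type*} [CommRing R]

lemma xT1 (x y t s : R) (hx : x * x = 0) (hy : y * y = 0)
    (hts : t * s = 1) (l : ℕ) : (x * (TT x y t l).1 = x * ((-t)^l * (1 - y * ∑ j ∈ Icc 1 l, s^j))) ∧
   (y * (TT x y t l).2 = y * ((-1)^l * (1 - x * ∑ j ∈ Icc 1 l, t^j))) := by
  induction l with
  | zero => simp [TT]
  | succ l ih =>
    obtain ⟨h1, h2⟩ := ih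
    have hp : t ^ (l+1) * s ^ (l+1) = 1 := by rw [← mul_pow, hts, one_pow]
    have hpp : (-t) ^ (l+1) * s ^ (l+1) = (-1)^(l+1) := by
      rw [← mul_pow, neg_mul, hts]
    rw [Finset.sum_Icc_succ_top (by omega), Finset.sum_Icc_succ_top (by omega)]
    have hq : (t:R) ^ l * (-1)^l = (-t)^l := by rw [← mul_pow]; simp
    constructor
    · simp only [TT]
      linear_combination (t * (x-1)) * h1 + x * h2 + t * (-t)^l * (1 - y * ∑ j ∈ Icc 1 l, s^j) * hx - y * (-1)^l * (∑ j ∈ Icc 1 l, t^j) * hx + x * y * hpp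
    · simp only [TT]
      linear_combination (t * y) * h1 + (y-1) * h2 + (-1)^l * (1 - x * ∑ j ∈ Icc 1 l, t^j) * hy - t * (-t)^l * x * (∑ j ∈ Icc 1 l, s^j) * hy - x * y * t * hq

lemma xD1 (x y t s : R) (hx : x * x = 0) (hy : y * y = 0)
    (hts : t * s = 1) (l : ℕ) : (x * (DD x y t l).1 = x * ((-t)^l * (l - y * ∑ j ∈ Icc 1 l, ((l:R) + 1 - j) * s^j))) ∧
   (y * (DD x y t l).2 = y * ((-1)^l * (l - x * ∑ j ∈ Icc 1 l, ((l:R) + 1 - j) * t^j))) := by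
  induction l with
  | zero => simp [DD]
  | succ l ih =>
    obtain ⟨h1, h2⟩ := ih
    obtain ⟨h3, h4⟩ := xT1 x y t s hx hy hts (l+1)
    have aux : ∀ z : R, ∑ j ∈ Icc 1 (l+1), (((l+1:ℕ):R) + 1 - j) * z^j =
        ∑ j ∈ Icc 1 (l+1), z^j + ∑ j ∈ Icc 1 l, ((l:R) + 1 - j) * z^j := by
      intro z
      have : ∑ j ∈ Icc 1 l, ((l:R) + 1 - j) * z^j = ∑ j ∈ Icc 1 (l+1), ((l:R) + 1 - j) * z^j := by
        rw [Finset.sum_Icc_succ_top (by omega)]; simp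
      rw [this, ← Finset.sum_add_distrib]
      apply Finset.sum_congr rfl
      intros; push_cast; ring
    rw [aux, aux]
    constructor
    · simp only [DD]
      push_cast
      linear_combination h3 - t * h1
    · simp only [DD]
      push_cast
      linear_combination h4 - h2

lemma xprod (x y t s : R) (hx : x * x = 0) (hy : y * y = 0)
    (hts : t * s = 1) {N : ℕ} (ls : Fin N → ℕ) (I : Finset (Fin N)) :
   (x * ∏ i ∈ I, (TT x y t (ls i)).1 = x * ((-t)^(∑ i ∈ I, ls i) * (1 - y * ∑ i ∈ I, ∑ j ∈ Icc 1 (ls i), s^j))) ∧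
   (y * ∏ i ∈ I, (TT x y t (ls i)).2 = y * ((-1)^(∑ i ∈ I, ls i) * (1 - x * ∑ i ∈ I, ∑ j ∈ Icc 1 (ls i), t^j))) := by
  classical
  induction I using Finset.induction_on with
  | empty => simp
  | insert a I ha ih =>
    obtain ⟨h1, h2⟩ := ih
    obtain ⟨h3, h4⟩ := xT1 x y t s hx hy hts (ls a)
    simp only [Finset.prod_insert ha, Finset.sum_insert ha, pow_add]
    constructor
    · linear_combination (∏ i ∈ I, (TT x y t (ls i)).1) * h3 + ((-t)^(ls a) * (1 - y * ∑ j ∈ Icc 1 (ls a), s^j)) * h1 + x * (-t)^(ls a) * (-t)^(∑ i ∈ I, ls i) * (∑ j ∈ Icc 1 (ls a), s^j) * (∑ i ∈ I, ∑ j ∈ Icc 1 (ls i), s^j) * hy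
    · linear_combination (∏ i ∈ I, (TT x y t (ls i)).2) * h4 + ((-1)^(ls a) * (1 - x * ∑ j ∈ Icc 1 (ls a), t^j)) * h2 + y * (-1)^(ls a) * (-1)^(∑ i ∈ I, ls i) * (∑ j ∈ Icc 1 (ls a), t^j) * (∑ i ∈ I, ∑ j ∈ Icc 1 (ls i), t^j) * hx

/-- the generating function of bipartition coefficients -/
def gg {R : Type*} [CommRing R] (l : ℕ) {N : ℕ} (ls : Fin N → ℕ) (z : R) : R :=
  ∑ j ∈ Icc 1 l, ((l:R) + 1 - j) * z^j + l * ∑ i, ∑ j ∈ Icc 1 (ls i), z^j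

lemma FF_dual (x y t s : R) (hx : x * x = 0) (hy : y * y = 0)
    (hts : t * s = 1) (l : ℕ) {N : ℕ} (ls : Fin N → ℕ) :
    FF x y t l ls = (-1)^(l + ∑ i, ls i) * (l * (t^(l + ∑ i, ls i + 1) * x + y)
      - (t^(l + ∑ i, ls i + 1) * gg l ls s + gg l ls t) * (x * y)) := by
  obtain ⟨h1, h2⟩ := xprod x y t s hx hy hts ls univ
  obtain ⟨h3, h4⟩ := xD1 x y t s hx hy hts l
  unfold FF gg
  have hq : ∀ k : ℕ, (-t) ^ k = (-1)^k * t^k := fun k => by rw [← mul_pow]; simp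
  rw [hq] at h1 h3
  simp only [pow_add]
  linear_combination t * (∏ i, (TT x y t (ls i)).1) * h3 + t * ((-1)^l * t^l * (l - y * ∑ j ∈ Icc 1 l, ((l:R) + 1 - j) * s^j)) * h1 + (∏ i, (TT x y t (ls i)).2) * h4 +  ((-1)^l * (l - x * ∑ j ∈ Icc 1 l, ((l:R) + 1 - j) * t^j)) * h2 + t * x * (-1)^l * t^l * (-1)^(∑ i, ls i) * t^(∑ i, ls i) * (∑ j ∈ Icc 1 l, ((l:R) + 1 - j) * s^j) * (∑ i, ∑ j ∈ Icc 1 (ls i), s^j) * hy + y * (-1)^l * (-1)^(∑ i, ls i) * (∑ j ∈ Icc 1 l, ((l:R) + 1 - j) * t^j) * (∑ i, ∑ j ∈ Icc 1 (ls i), t^j) * hx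
end Dual

lemma gg_map {R S : Type*} [CommRing R] [CommRing S] (f : R →+* S) (l : ℕ) {N : ℕ} (ls : Fin N → ℕ) (z : R) :
    f (gg l ls z) = gg l ls (f z) := by
  simp [gg]

abbrev K := DualNumber (DualNumber ℚ)

lemma extract {N N' : ℕ} (l l' : ℕ) (ls : Fin N → ℕ) (ls' : Fin N' → ℕ) (t : ℚ) (ht : t ≠ 0)
    (h : ∀ x y : ℕ, FF (x : ℚ) (y : ℚ) t l ls = FF (x : ℚ) (y : ℚ) t l' ls') :
    (-1 : ℚ)^(l + ∑ i, ls i) * l = (-1)^(l' + ∑ i, ls' i) * l' ∧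
    (-1 : ℚ)^(l + ∑ i, ls i) * l * t^(l + ∑ i, ls i + 1) =
       (-1)^(l' + ∑ i, ls' i) * l' * t^(l' + ∑ i, ls' i + 1) ∧
    (-1 : ℚ)^(l + ∑ i, ls i) * (t^(l + ∑ i, ls i + 1) * gg l ls t⁻¹ + gg l ls t) =
      (-1 : ℚ)^(l' + ∑ i, ls' i) * (t^(l' + ∑ i, ls' i + 1) * gg l' ls' t⁻¹ + gg l' ls' t) := by
  obtain ⟨x, hxd⟩ : ∃ x : K, x = TrivSqZeroExt.inl (DualNumber.eps) := ⟨_, rfl⟩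
  obtain ⟨y, hyd⟩ : ∃ y : K, y = DualNumber.eps := ⟨_, rfl⟩
  have hx : x * x = 0 := by
    rw [hxd, ← TrivSqZeroExt.inl_mul]; simp
  have hy : y * y = 0 := by rw [hyd]; simp
  have hts : algebraMap ℚ K t * algebraMap ℚ K t⁻¹ = 1 := by
    rw [← map_mul, mul_inv_cancel₀ ht, map_one]
  have key := FF_transfer (R := K) l l' ls ls' t h x y
  rw [FF_dual x y _ _ hx hy hts, FF_dual x y _ _ hx hy hts] at key
  simp only [← gg_map] at key
  generalize hA : gg l ls t = A at *
  generalize gg l' ls' t = A' at *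
  generalize gg l ls t⁻¹ = B at *
  generalize gg l' ls' t⁻¹ = B' at *
  generalize l + ∑ i, ls i = n at *
  generalize l' + ∑ i, ls' i = n' at *
  have conv : ∀ (n l : ℕ) (A B : ℚ), (-1 : K)^n * (l * ((algebraMap ℚ K t)^(n+1) * x + y)
      - ((algebraMap ℚ K t)^(n+1) * algebraMap ℚ K B + algebraMap ℚ K A) * (x * y)) =
      (algebraMap ℚ K ((-1)^n * l * t^(n+1)) * x + algebraMap ℚ K ((-1)^n * l) * y
       + algebraMap ℚ K (-(-1)^n * (t^(n+1)*B+A)) * (x * y)) := by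
    intro n l A B
    simp only [map_mul, map_pow, map_neg, map_one, map_natCast, map_add]
    ring
  rw [conv, conv] at key
  have comp : ∀ a b c : ℚ, (algebraMap ℚ K a * x + algebraMap ℚ K b * y + algebraMap ℚ K c * (x*y)).fst.snd = a ∧
    (algebraMap ℚ K a * x + algebraMap ℚ K b * y + algebraMap ℚ K c * (x*y)).snd.fst = b ∧
    (algebraMap ℚ K a * x + algebraMap ℚ K b * y + algebraMap ℚ K c * (x*y)).snd.snd = c := by
    intro a b c
    have hal : ∀ q : ℚ, algebraMap ℚ K q = TrivSqZeroExt.inl (TrivSqZeroExt.inl q) := fun q => rfl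
    simp [hxd, hyd, hal]
  have c1 := comp ((-1)^n * l * t^(n+1)) ((-1)^n * l) (-(-1)^n * (t^(n+1)*B+A))
  have c2 := comp ((-1)^n' * l' * t^(n'+1)) ((-1)^n' * l') (-(-1)^n' * (t^(n'+1)*B'+A'))
  rw [key] at c1
  refine ⟨c1.2.1.symm.trans c2.2.1, c1.1.symm.trans c2.1, ?_⟩
  have := c1.2.2.symm.trans c2.2.2
  linear_combination -this

def mm {N : ℕ} (ls : Fin N → ℕ) (k : ℕ) : ℕ := #{i | k ≤ ls i}

def fc (l : ℕ) {N : ℕ} (ls : Fin N → ℕ) (k : ℕ) : ℕ := (l + 1 - k) + l * mm ls k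

lemma gg_eq (l : ℕ) {N : ℕ} (ls : Fin N → ℕ) (z : ℚ) :
    gg l ls z = ∑ k ∈ Icc 1 (l + ∑ i, ls i), (fc l ls k : ℚ) * z ^ k := by
  have hi : ∀ i, ls i ≤ ∑ i, ls i := fun i =>
    Finset.single_le_sum (f := ls) (fun _ _ => Nat.zero_le _) (mem_univ i)
  have h1 : ∑ j ∈ Icc 1 l, ((l:ℚ) + 1 - j) * z^j =
      ∑ k ∈ Icc 1 (l + ∑ i, ls i), ((l + 1 - k : ℕ) : ℚ) * z ^ k := by
    have h0 : ∑ j ∈ Icc 1 l, ((l:ℚ) + 1 - j) * z^j = ∑ j ∈ Icc 1 l, ((l + 1 - j : ℕ):ℚ) * z^j := by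
      apply Finset.sum_congr rfl
      intro j hj
      rw [mem_Icc] at hj
      rw [Nat.cast_sub (by omega)]; push_cast; ring
    rw [h0]
    apply Finset.sum_subset
    · intro j; simp only [mem_Icc]; omega
    · intro j _ hj2
      by_cases hj : l + 1 - j = 0
      · simp [hj]
      · simp only [mem_Icc] at *; omega
  have h2 : ∀ i, ∑ j ∈ Icc 1 (ls i), z^j =
      ∑ k ∈ Icc 1 (l + ∑ i, ls i), if k ≤ ls i then z ^ k else 0 := by
    intro i
    rw [← Finset.sum_filter]
    apply Finset.sum_congr _ (fun _ _ => rfl)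
    ext k; simp only [mem_Icc, mem_filter]; have := hi i; omega
  unfold gg
  rw [h1, Finset.sum_congr rfl (fun i _ => h2 i), Finset.sum_comm, Finset.mul_sum,
    ← Finset.sum_add_distrib]
  apply Finset.sum_congr rfl
  intro k _
  rw [← Finset.sum_filter, Finset.sum_const, fc, mm]
  push_cast
  rw [nsmul_eq_mul]; ring

lemma palin (n : ℕ) (f g : ℕ → ℚ)
    (h : ∀ t : ℚ, t ≠ 0 → t^(n+1) * ∑ k ∈ Icc 1 n, f k * t⁻¹^k + ∑ k ∈ Icc 1 n, f k * t^k =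
      t^(n+1) * ∑ k ∈ Icc 1 n, g k * t⁻¹^k + ∑ k ∈ Icc 1 n, g k * t^k)
    (j : ℕ) (hj : 1 ≤ j) (hjn : j ≤ n) : f (n + 1 - j) + f j = g (n+1-j) + g j := by
  have conv : ∀ (f : ℕ → ℚ) (t : ℚ), t ≠ 0 →
      t^(n+1) * ∑ k ∈ Icc 1 n, f k * t⁻¹^k + ∑ k ∈ Icc 1 n, f k * t^k =
      (∑ k ∈ Icc 1 n, Polynomial.C (f (n+1-k) + f k) * Polynomial.X ^ k).eval t := by
    intro f t ht
    have : t^(n+1) * ∑ k ∈ Icc 1 n, f k * t⁻¹^k = ∑ k ∈ Icc 1 n, f (n+1-k) * t^k := by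
      rw [Finset.mul_sum]
      apply Finset.sum_bij' (fun k _ => n + 1 - k) (fun k _ => n + 1 - k)
      · intro k hk; simp only [mem_Icc] at *; omega
      · intro k hk; simp only [mem_Icc] at *; omega
      · intro k hk; simp only [mem_Icc] at *; omega
      · intro k hk; simp only [mem_Icc] at *; omega
      · intro k hk
        simp only [mem_Icc] at hk
        have e : n + 1 - (n + 1 - k) = k := by omega
        have e2 : t^(n+1) = t^(n+1-k) * t^k := by rw [← pow_add]; congr 1; omega
        rw [e, e2, inv_pow]
        field_simp
    rw [this, ← Finset.sum_add_distrib, Polynomial.eval_finsetSum]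
    apply Finset.sum_congr rfl
    intro k _
    simp; ring
  have key : (∑ k ∈ Icc 1 n, Polynomial.C (f (n+1-k) + f k) * Polynomial.X ^ k) =
      (∑ k ∈ Icc 1 n, Polynomial.C (g (n+1-k) + g k) * Polynomial.X ^ k) := by
    apply Polynomial.eq_of_infinite_eval_eq
    apply (Set.finite_singleton (0:ℚ)).infinite_compl.mono
    intro t ht
    simp only [Set.mem_ofPred_eq]
    have ht : t ≠ 0 := by simpa using ht
    rw [← conv f t ht, ← conv g t ht, h t ht]
  have := congrArg (fun p => p.coeff j) key
  have hmem : 1 ≤ j ∧ j ≤ n := ⟨hj, hjn⟩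
  simp only [Polynomial.finsetSum_coeff, Polynomial.coeff_C_mul, Polynomial.coeff_X_pow] at this
  simpa [hmem, mem_Icc, hj, hjn, Nat.pos_iff_ne_zero] using this

lemma mm_anti {N : ℕ} (ls : Fin N → ℕ) {a b : ℕ} (h : a ≤ b) : mm ls b ≤ mm ls a := by
  apply Finset.card_le_card
  intro i; simp only [mem_filter, mem_univ, true_and]; omega

lemma mm_two {N : ℕ} (ls : Fin N → ℕ) {a b : ℕ} (ha : 1 ≤ mm ls a) (hb : 2 ≤ mm ls b) :
    a + b ≤ ∑ i, ls i := by
  obtain ⟨i, hi⟩ := Finset.card_pos.mp ha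
  obtain ⟨j, hj, hne⟩ := Finset.exists_mem_ne (s := ({i | b ≤ ls i} : Finset (Fin N))) hb i
  simp only [mem_filter, mem_univ, true_and] at hi hj
  calc a + b ≤ ls i + ls j := by omega
    _ = ∑ k ∈ {i, j}, ls k := by rw [Finset.sum_pair hne.symm]
    _ ≤ _ := Finset.sum_le_sum_of_subset (by simp)

lemma mm_one {N : ℕ} (ls : Fin N → ℕ) {a : ℕ} (ha : 1 ≤ mm ls a) : a ≤ ∑ i, ls i := by
  obtain ⟨i, hi⟩ := Finset.card_pos.mp ha
  simp only [mem_filter, mem_univ, true_and] at hi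
  exact hi.trans (Finset.single_le_sum (f := ls) (fun _ _ => Nat.zero_le _) (mem_univ i))

lemma mm_half {N N' : ℕ} (ls : Fin N → ℕ) (ls' : Fin N' → ℕ) (n : ℕ) (h1 : ∑ i, ls i + 3 ≤ n)
    (h2 : ∑ i, ls' i + 3 ≤ n)
    (h : ∀ k, 1 ≤ k → k < n → mm ls (n - k) + mm ls k = mm ls' (n - k) + mm ls' k)
    (k : ℕ) (hk : n < 2 * k) (hk1 : 1 ≤ mm ls k) : 1 ≤ mm ls' k := by
  by_contra hc
  have hP : ∃ j, n < 2 * j ∧ 1 ≤ mm ls j ∧ mm ls' j = 0 ∧ mm ls (j+1) = 0 := by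
    have hex : ∃ d, mm ls (k + d + 1) = 0 := by
      refine ⟨n, ?_⟩
      by_contra h0
      have := mm_one ls (a := k + n + 1) (by omega)
      omega
    classical
    have hs := Nat.find_spec hex
    set d := Nat.find hex
    refine ⟨k + d, by omega, ?_, ?_, hs⟩
    · rcases Nat.eq_zero_or_pos d with h0 | h0
      · rw [h0]; exact hk1
      · have := Nat.find_min hex (m := d - 1) (by omega)
        rw [show k + (d - 1) + 1 = k + d by omega] at this
        omega
    · have := mm_anti ls' (a := k) (b := k + d) (by omega)
      omega
  obtain ⟨j, hj1, hj2, hj3, hj4⟩ := hP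
  have hjS := mm_one ls hj2
  have e1 := h j (by omega) (by omega)
  have e2 := h (j+1) (by omega) (by omega)
  have a1 := mm_anti ls (a := n - j) (b := j) (by omega)
  have a2 := mm_anti ls' (a := j) (b := j + 1) (by omega)
  have a3 := mm_anti ls' (a := n - (j+1)) (b := n - j) (by omega)
  have := mm_two ls (a := j) (b := n - (j+1)) hj2 (by omega)
  omega

lemma mm_eq {N N' : ℕ} (ls : Fin N → ℕ) (ls' : Fin N' → ℕ) (n : ℕ) (h1 : ∑ i, ls i + 3 ≤ n)
    (h2 : ∑ i, ls' i + 3 ≤ n)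
    (h : ∀ k, 1 ≤ k → k < n → mm ls (n - k) + mm ls k = mm ls' (n - k) + mm ls' k)
    (k : ℕ) (hk0 : 1 ≤ k) : mm ls k = mm ls' k := by
  have big : ∀ k, n < 2 * k → mm ls k = mm ls' k := by
    intro k hk
    have b1 : mm ls k < 2 := by
      by_contra hc
      have := mm_two ls (a := k) (b := k) (by omega) (by omega)
      omega
    have b2 : mm ls' k < 2 := by
      by_contra hc
      have := mm_two ls' (a := k) (b := k) (by omega) (by omega)
      omega
    have c1 := mm_half ls ls' n h1 h2 h k hk
    have c2 := mm_half ls' ls n h2 h1 (fun k a b => (h k a b).symm) k hk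
    omega
  rcases lt_trichotomy n (2 * k) with hk | hk | hk
  · exact big k hk
  · have := h k hk0 (by omega)
    rw [show n - k = k by omega] at this
    omega
  · have := h k hk0 (by omega)
    have := big (n - k) (by omega)
    omega

lemma arith {N N' : ℕ} (l l' : ℕ) (ls : Fin N → ℕ) (ls' : Fin N' → ℕ) (hl : 2 ≤ l) (hl' : 2 ≤ l')
    (h : ∀ t : ℚ, t ≠ 0 → ∀ x y : ℕ, FF (x : ℚ) (y : ℚ) t l ls = FF (x : ℚ) (y : ℚ) t l' ls') :
    l = l' ∧ ∀ k, 1 ≤ k → mm ls k = mm ls' k := by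
  have ex := fun t ht => extract l l' ls ls' t ht (h t ht)
  have hll : l = l' := by
    have := (ex 1 one_ne_zero).1
    have := congrArg abs this
    simpa [abs_mul] using this
  subst hll
  refine ⟨rfl, ?_⟩
  have hl0 : (l : ℚ) ≠ 0 := by positivity
  have hn : l + ∑ i, ls i = l + ∑ i, ls' i := by
    have e := ex 2 two_ne_zero
    rw [e.1] at e
    have h2 := mul_left_cancel₀ (mul_ne_zero (pow_ne_zero _ (by norm_num)) hl0) e.2.1
    have := pow_right_injective₀ (a := (2:ℚ)) (by norm_num) (by norm_num) h2
    omega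
  set n := l + ∑ i, ls i with hnd
  have hp := palin n (fun k => fc l ls k) (fun k => fc l ls' k) (by
    intro t ht
    have e := (ex t ht).2.2
    rw [← hn] at e
    have := mul_left_cancel₀ (pow_ne_zero _ (by norm_num)) e
    rw [gg_eq, gg_eq, gg_eq, gg_eq, ← hn, ← hnd] at this
    exact this)
  apply mm_eq ls ls' (n+1) (by omega) (by omega)
  intro k hk hkn
  have := hp k hk (by omega)
  simp only [fc] at this
  have t2 : (l + 1 - (n + 1 - k) + l * mm ls (n + 1 - k)) + (l + 1 - k + l * mm ls k) =
    (l + 1 - (n + 1 - k) + l * mm ls' (n + 1 - k)) + (l + 1 - k + l * mm ls' k) := by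
    exact_mod_cast this
  have t3 : l * (mm ls (n + 1 - k) + mm ls k) = l * (mm ls' (n + 1 - k) + mm ls' k) := by
    rw [mul_add, mul_add]; omega
  exact Nat.eq_of_mul_eq_mul_left (by omega) t3


open Classical in
/-- weighted count of proper colourings -/
noncomputable def ZZ {V C : Type*} [Fintype V] [Fintype C] (G : SimpleGraph V) (w : C → ℚ) : ℚ :=
  ∑ κ : V → C, if (∀ u v, G.Adj u v → κ u ≠ κ v) then ∏ v, w (κ v) else 0

open Classical in
lemma count_eq {V C : Type*} [Fintype V] [Fintype C] (G : SimpleGraph V) (e : C ↪ ℕ) (a : C → ℕ)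
    (α : ℕ →₀ ℕ) (hα : ∀ c, α (e c) = a c) (hα' : ∀ i, (∀ c, e c ≠ i) → α i = 0) :
    #{κ ∈ ({κ : V → C | ∀ u v, G.Adj u v → κ u ≠ κ v} : Finset (V → C)) |
        (fun c => #{v | κ v = c}) = a} =
    Nat.card {κ : V → ℕ // (∀ u w : V, G.Adj u w → κ u ≠ κ w) ∧
        ∀ i : ℕ, (κ ⁻¹' {i}).ncard = α i} := by
  rw [← Nat.card_eq_finsetCard]
  refine Nat.card_eq_of_bijective (f := fun κ => ⟨fun v => e (κ.1 v), ?_, ?_⟩) ⟨?_, ?_⟩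
  · have h := κ.2
    simp only [mem_filter, mem_univ, true_and] at h
    intro u w huw hh
    exact h.1 u w huw (e.injective hh)
  · have h := κ.2
    simp only [mem_filter, mem_univ, true_and] at h
    intro i
    by_cases hi : ∃ c, e c = i
    · obtain ⟨c, rfl⟩ := hi
      rw [hα]
      refine Eq.trans ?_ (congrFun h.2 c)
      rw [← Set.ncard_coe_finset]
      congr 1
      ext v; simp
    · push Not at hi
      rw [hα' i hi]
      rw [Set.ncard_eq_zero]
      ext v; simpa using hi _
  · intro κ κ' h
    simp only [Subtype.mk.injEq] at h
    apply Subtype.ext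
    funext v
    exact e.injective (congrFun h v)
  · rintro ⟨κ, h1, h2⟩
    have hr : ∀ v, ∃ c, e c = κ v := by
      intro v
      by_contra hc
      push Not at hc
      have := h2 (κ v)
      rw [hα' _ hc, Set.ncard_eq_zero] at this
      have hv : v ∈ κ ⁻¹' {κ v} := rfl
      rw [this] at hv
      exact hv
    choose g hg using hr
    refine ⟨⟨g, ?_⟩, ?_⟩
    · simp only [mem_filter, mem_univ, true_and]
      refine ⟨fun u v huv hh => h1 u v huv (by rw [← hg, ← hg, hh]), ?_⟩
      funext c
      rw [← hα, ← h2, ← Set.ncard_coe_finset]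
      congr 1
      ext v
      simp [← hg]
    · apply Subtype.ext
      funext v
      exact hg v

open Classical in
lemma ZZ_comp {V C : Type*} [Fintype V] [Fintype C] (G : SimpleGraph V) (w : C → ℚ) :
    ZZ G w = ∑ κ ∈ ({κ : V → C | ∀ u v, G.Adj u v → κ u ≠ κ v} : Finset (V → C)),
      (fun a : C → ℕ => ∏ c, w c ^ a c) (fun c => #{v | κ v = c}) := by
  unfold ZZ
  rw [← Finset.sum_filter]
  apply Finset.sum_congr rfl
  intro κ _
  simp only
  rw [← Finset.prod_fiberwise_of_maps_to (s := univ) (t := univ) (g := κ) (fun _ _ => mem_univ _)]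
  apply Finset.prod_congr rfl
  intro c _
  rw [Finset.prod_congr rfl (g := fun _ => w c), Finset.prod_const]
  intro v hv
  simp only [mem_filter, mem_univ, true_and] at hv
  rw [hv]

lemma ZZ_eq {V W C : Type*} [Fintype V] [Fintype W] [Fintype C] (G : SimpleGraph V)
    (H : SimpleGraph W) (hX : SameCSF G H) (w : C → ℚ) : ZZ G w = ZZ H w := by
  classical
  obtain ⟨e⟩ : Nonempty (C ↪ ℕ) := ⟨(Fintype.equivFin C).toEmbedding.trans Fin.valEmbedding⟩
  rw [ZZ_comp, ZZ_comp, Finset.sum_comp (fun a : C → ℕ => ∏ c, w c ^ a c)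
      (fun (κ : V → C) c => #{v | κ v = c}), Finset.sum_comp (fun a : C → ℕ => ∏ c, w c ^ a c)
      (fun (κ : W → C) c => #{v | κ v = c})]
  set A := ({κ : V → C | ∀ u v, G.Adj u v → κ u ≠ κ v} : Finset (V → C))
  set B := ({κ : W → C | ∀ u v, H.Adj u v → κ u ≠ κ v} : Finset (W → C))
  have hc : ∀ a : C → ℕ, #{κ ∈ A | (fun c => #{v | κ v = c}) = a} =
      #{κ ∈ B | (fun c => #{v | κ v = c}) = a} := by
    intro a
    have h1 : ∀ c, (Finsupp.embDomain e (Finsupp.equivFunOnFinite.symm a)) (e c) = a c := by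
      intro c; rw [Finsupp.embDomain_apply_self]; rfl
    have h2 : ∀ i, (∀ c, e c ≠ i) →
        (Finsupp.embDomain e (Finsupp.equivFunOnFinite.symm a)) i = 0 := by
      intro i hi
      rw [Finsupp.embDomain_of_notMem_range]
      rintro ⟨c, hc⟩
      exact hi c hc
    rw [count_eq G e a _ h1 h2, count_eq H e a _ h1 h2]
    exact hX _
  set IA := A.image (fun κ => fun c => #{v | κ v = c})
  set IB := B.image (fun κ => fun c => #{v | κ v = c})
  rw [Finset.sum_subset (s₁ := IA) (s₂ := IA ∪ IB) subset_union_left,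
    Finset.sum_subset (s₁ := IB) (s₂ := IA ∪ IB) subset_union_right]
  · apply Finset.sum_congr rfl
    intro a _
    rw [hc a]
  · intro a _ ha
    have : #{κ ∈ B | (fun c => #{v | κ v = c}) = a} = 0 := by
      rw [Finset.card_eq_zero, Finset.filter_eq_empty_iff]
      intro κ hκ hh
      exact ha (mem_image.mpr ⟨κ, hκ, hh⟩)
    rw [this, zero_smul]
  · intro a _ ha
    have : #{κ ∈ A | (fun c => #{v | κ v = c}) = a} = 0 := by
      rw [Finset.card_eq_zero, Finset.filter_eq_empty_iff]
      intro κ hκ hh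
      exact ha (mem_image.mpr ⟨κ, hκ, hh⟩)
    rw [this, zero_smul]

section legs
variable {C : Type*}

/-- the colouring of a leg is proper, given the root colour -/
def Chain (r : C) {l : ℕ} (g : Fin l → C) : Prop :=
  ∀ j : Fin l, (Fin.cons r g : Fin (l+1) → C) j.castSucc ≠ (Fin.cons r g : Fin (l+1) → C) j.succ

/-- colour of last vertex -/
def lastc (r : C) {l : ℕ} (g : Fin l → C) : C := (Fin.cons r g : Fin (l+1) → C) (Fin.last l)

lemma chain_cons (r d : C) {l : ℕ} (g : Fin l → C) :
    Chain r (Fin.cons d g : Fin (l+1) → C) ↔ r ≠ d ∧ Chain d g := by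
  unfold Chain
  rw [Fin.forall_fin_succ]
  simp [← Fin.succ_castSucc]

lemma lastc_cons (r d : C) {l : ℕ} (g : Fin l → C) :
    lastc r (Fin.cons d g : Fin (l+1) → C) = lastc d g := by
  unfold lastc
  rw [← Fin.succ_last]; simp

variable [Fintype C] (w : C → ℚ)

open Classical in
noncomputable def Tw (r : C) (l : ℕ) : ℚ :=
  ∑ g : Fin l → C, if Chain r g then ∏ j, w (g j) else 0

open Classical in
noncomputable def Dw (r s : C) (l : ℕ) : ℚ :=
  ∑ g : Fin l → C, if Chain r g ∧ lastc r g ≠ s then ∏ j, w (g j) else 0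

open Classical in
lemma rec_aux (P : C → ∀ {l : ℕ}, (Fin l → C) → Prop)
    (hP : ∀ r d, ∀ {l : ℕ} (g : Fin l → C), P r (Fin.cons d g : Fin (l+1) → C) ↔ r ≠ d ∧ P d g)
    (r : C) (l : ℕ) :
    (∑ g : Fin (l+1) → C, if P r g then ∏ j, w (g j) else 0) =
    ∑ d, if r ≠ d then w d * ∑ g : Fin l → C, (if P d g then ∏ j, w (g j) else 0) else 0 := by
  rw [← (Fin.consEquiv (fun _ => C)).sum_comp, Fintype.sum_prod_type]
  apply Finset.sum_congr rfl
  intro d _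
  split_ifs with hd
  · rw [Finset.mul_sum]
    apply Finset.sum_congr rfl
    intro g _
    have e : (Fin.consEquiv (fun _ => C)) (d, g) = (Fin.cons d g : Fin (l+1) → C) := rfl
    rw [e, Fin.prod_univ_succ]
    simp only [hP, Fin.cons_zero, Fin.cons_succ, mul_ite, mul_zero]
    simp [hd]
  · apply Finset.sum_eq_zero
    intro g _
    have e : (Fin.consEquiv (fun _ => C)) (d, g) = (Fin.cons d g : Fin (l+1) → C) := rfl
    rw [e, if_neg]
    rw [hP]
    exact fun h => hd h.1

open Classical in
lemma Tw_succ (r : C) (l : ℕ) : Tw w r (l+1) = ∑ d, if r ≠ d then w d * Tw w d l else 0 :=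
  rec_aux w (fun r _ g => Chain r g) (fun r d _ g => chain_cons r d g) r l

open Classical in
lemma Dw_succ (r s : C) (l : ℕ) :
    Dw w r s (l+1) = ∑ d, if r ≠ d then w d * Dw w d s l else 0 := by
  have := rec_aux w (fun r _ g => Chain r g ∧ lastc r g ≠ s)
    (fun r d _ g => by rw [chain_cons, lastc_cons, and_assoc]) r l
  unfold Dw
  convert this

lemma Tw_zero (r : C) : Tw w r 0 = 1 := by
  simp [Tw, Chain]

open Classical in
lemma Dw_zero (r s : C) : Dw w r s 0 = if r ≠ s then 1 else 0 := by
  simp [Dw, Chain, lastc]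

lemma Dw_rec (r s : C) (l : ℕ) : Dw w r s (l+1) = Tw w r (l+1) - w s * Dw w r s l := by
  classical
  induction l generalizing r with
  | zero =>
    rw [Dw_succ, Tw_succ]
    simp only [Dw_zero, Tw_zero]
    have : ∀ d, (if r ≠ d then w d * (if d ≠ s then (1:ℚ) else 0) else 0) =
      (if r ≠ d then w d * 1 else 0) - if d = s then (w s * if r ≠ s then 1 else 0) else 0 := by
      intro d
      by_cases h1 : d = s
      · subst h1; by_cases h2 : r = d <;> simp [h2]
      · by_cases h2 : r = d <;> simp [h1, h2]
    rw [Finset.sum_congr rfl (fun d _ => this d), Finset.sum_sub_distrib]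
    simp
  | succ l ih =>
    rw [Dw_succ, Tw_succ, Dw_succ w r s l, Finset.mul_sum, ← Finset.sum_sub_distrib]
    apply Finset.sum_congr rfl
    intro d _
    rw [ih]
    split_ifs <;> ring

end legs

/-- two-type weights -/
def wt (x y : ℕ) (t : ℚ) : Fin x ⊕ Fin y → ℚ := Sum.elim (fun _ => t) (fun _ => 1)

lemma wt_inl (x y : ℕ) (t : ℚ) (a) : wt x y t (Sum.inl a) = t := rfl

lemma wt_inr (x y : ℕ) (t : ℚ) (a) : wt x y t (Sum.inr a) = 1 := rfl

lemma Tw_eq (x y : ℕ) (t : ℚ) (l : ℕ) :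
    (∀ a, Tw (wt x y t) (Sum.inl a) l = (TT (x:ℚ) y t l).1) ∧
    (∀ a, Tw (wt x y t) (Sum.inr a) l = (TT (x:ℚ) y t l).2) := by
  induction l with
  | zero => simp [Tw_zero, TT]
  | succ l ih =>
    have aux : ∀ (m : ℕ) (a : Fin m) (q : ℚ), ∑ b : Fin m, (if a = b then 0 else q) = (m - 1) * q := by
      intro m a q
      have : ∀ b : Fin m, (if a = b then 0 else q) = q - if a = b then q else 0 := by
        intro b; split_ifs <;> ring
      rw [Finset.sum_congr rfl (fun b _ => this b), Finset.sum_sub_distrib]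
      simp; ring
    constructor
    · intro a
      rw [Tw_succ, Fintype.sum_sum_type]
      simp [ih.1, ih.2, wt_inl, wt_inr, TT, aux]
      ring
    · intro a
      rw [Tw_succ, Fintype.sum_sum_type]
      simp [ih.1, ih.2, wt_inl, wt_inr, TT, aux]
      ring

lemma Dw_eq (x y : ℕ) (t : ℚ) (l : ℕ) :
    (∀ a, Dw (wt x y t) (Sum.inl a) (Sum.inl a) l = (DD (x:ℚ) y t l).1) ∧
    (∀ a, Dw (wt x y t) (Sum.inr a) (Sum.inr a) l = (DD (x:ℚ) y t l).2) := by
  induction l with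
  | zero => simp [Dw_zero, DD]
  | succ l ih =>
    constructor
    · intro a
      rw [Dw_rec, ih.1, (Tw_eq x y t _).1]; simp [wt_inl, wt_inr, DD]
    · intro a
      rw [Dw_rec, ih.2, (Tw_eq x y t _).2]; simp [wt_inl, wt_inr, DD]

lemma FF_eq (x y : ℕ) (t : ℚ) (l : ℕ) {N : ℕ} (ls : Fin N → ℕ) :
    ∑ r, wt x y t r * (Dw (wt x y t) r r l * ∏ i, Tw (wt x y t) r (ls i)) = FF (x:ℚ) y t l ls := by
  rw [Fintype.sum_sum_type]
  simp [Tw_eq, Dw_eq, FF, wt_inl, wt_inr]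
  ring

end Sq
namespace Sq

lemma chain_iff {C : Type*} (r : C) {l : ℕ} (g : Fin l → C) :
    Chain r g ↔ (∀ h : 0 < l, r ≠ g ⟨0, h⟩) ∧
      ∀ j (h : j + 1 < l), g ⟨j, by omega⟩ ≠ g ⟨j+1, h⟩ := by
  unfold Chain
  constructor
  · intro H
    refine ⟨fun h => ?_, fun j h => ?_⟩
    · exact H ⟨0, h⟩
    · exact H ⟨j + 1, h⟩
  · rintro ⟨h1, h2⟩ ⟨j, hj⟩
    cases j with
    | zero => exact h1 hj
    | succ j => exact h2 j hj

lemma lastc_eq {C : Type*} (r : C) {l : ℕ} (g : Fin l → C) (h : 0 < l) :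
    lastc r g = g ⟨l - 1, by omega⟩ := by
  cases l with
  | zero => omega
  | succ l => rfl

/-- directed edges of the model squid on coordinates (leg, position) -/
def EE (L : ℕ → ℕ) (a b : ℕ × ℕ) : Prop :=
  (a.1 = 0 ∧ a.2 = 0 ∧ b.2 = 1) ∨ (a.1 = b.1 ∧ 1 ≤ a.2 ∧ b.2 = a.2 + 1) ∨
    (a.1 = 0 ∧ a.2 = 0 ∧ b.1 = 0 ∧ b.2 = L 0)

def Val (L : ℕ → ℕ) (a : ℕ × ℕ) : Prop := (a.1 = 0 ∧ a.2 = 0) ∨ (1 ≤ a.2 ∧ a.2 ≤ L a.1)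

/-- coordinates on a squid -/
structure Par {V : Type*} (G : SimpleGraph V) (v : V) (L : ℕ → ℕ) (φ : V → ℕ × ℕ) : Prop where
  inj : Function.Injective φ
  val : ∀ u, Val L (φ u)
  surj : ∀ a, Val L a → ∃ u, φ u = a
  adj : ∀ u w, G.Adj u w ↔ EE L (φ u) (φ w) ∨ EE L (φ w) (φ u)
  two : 2 ≤ L 0
  fin : ∃ N, ∀ i, N < i → L i = 0
  root : φ v = (0, 0)

lemma ite_aux {p A B D : Prop} [Decidable p] [Decidable A] [Decidable B] [Decidable D]
    {a b c : ℚ} (h : p ↔ ((A ∧ D) ∧ B)) :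
    (if p then a * (b * c) else 0) = a * ((if A ∧ B then b else 0) * (if D then c else 0)) := by
  by_cases hA : A <;> by_cases hB : B <;> by_cases hD : D <;> simp [h, hA, hB, hD]

lemma Par.ZZ {V C : Type*} [Fintype V] [Fintype C] {G : SimpleGraph V} {v : V} {L : ℕ → ℕ}
    {φ : V → ℕ × ℕ} (P : Par G v L φ) (N : ℕ) (hN : ∀ i, N < i → L i = 0) (w : C → ℚ) :
    ZZ G w = ∑ r, w r * (Dw w r r (L 0) * ∏ i : Fin N, Tw w r (L (i + 1))) := by
  classical
  let M := Option (Σ i : Fin (N+1), Fin (L i))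
  let m : M → ℕ × ℕ := fun a => match a with
    | none => (0, 0)
    | some ⟨i, j⟩ => (i, j + 1)
  have hm : ∀ a, Val L (m a) := by
    rintro (_ | ⟨i, j⟩)
    · left; exact ⟨rfl, rfl⟩
    · right; exact ⟨by simp [m], by simp only [m]; omega⟩
  choose e he using fun a => P.surj (m a) (hm a)
  have hminj : Function.Injective m := by
    rintro (_ | ⟨i, j⟩) (_ | ⟨i', j'⟩) h
    · rfl
    · simp [m] at h
    · simp [m] at h
    · simp only [m, Prod.mk.injEq, add_left_inj] at h
      obtain ⟨h1, h2⟩ := h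
      have : i = i' := Fin.ext h1
      subst this
      have : j = j' := Fin.ext h2
      rw [this]
  have hbij : Function.Bijective e := by
    constructor
    · intro a b h
      apply hminj
      rw [← he, ← he, h]
    · intro u
      rcases P.val u with h | h
      · refine ⟨none, P.inj ?_⟩
        rw [he]
        exact Prod.ext h.1.symm h.2.symm
      · have hlt : (φ u).1 < N + 1 := by
          by_contra hc
          have := hN (φ u).1 (by omega)
          omega
        refine ⟨some ⟨⟨(φ u).1, hlt⟩, ⟨(φ u).2 - 1, by simp only; omega⟩⟩, P.inj ?_⟩
        rw [he]
        apply Prod.ext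
        · rfl
        · simp only [m]; omega
  let E : M ≃ V := Equiv.ofBijective e hbij
  have hprop : ∀ κ : M → C, (∀ u v, G.Adj u v → κ (E.symm u) ≠ κ (E.symm v)) ↔
      (∀ i : Fin (N+1), Chain (κ none) (fun j => κ (some ⟨i, j⟩))) ∧
        lastc (κ none) (fun j : Fin (L (0 : Fin (N+1))) => κ (some ⟨0, j⟩)) ≠ κ none := by
    intro κ
    have h1 : (∀ u v, G.Adj u v → κ (E.symm u) ≠ κ (E.symm v)) ↔
        ∀ a b, EE L (m a) (m b) → κ a ≠ κ b := by
      constructor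
      · intro H a b hab
        have := H (E a) (E b) ((P.adj _ _).2 (Or.inl (by
          change EE L (φ (e a)) (φ (e b)); rw [he, he]; exact hab)))
        simpa using this
      · intro H u v huv
        obtain ⟨a, rfl⟩ := E.surjective u
        obtain ⟨b, rfl⟩ := E.surjective v
        simp only [Equiv.symm_apply_apply]
        rcases (P.adj _ _).1 huv with h | h
        · change EE L (φ (e a)) (φ (e b)) at h
          rw [he, he] at h; exact H a b h
        · change EE L (φ (e b)) (φ (e a)) at h
          rw [he, he] at h; exact (H b a h).symm
    rw [h1]
    have two : 2 ≤ L (0 : Fin (N+1)) := P.two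
    rw [lastc_eq _ _ (by omega)]
    simp only [chain_iff]
    constructor
    · intro H
      refine ⟨fun i => ⟨fun h => ?_, fun j h => ?_⟩, ?_⟩
      · exact H none (some ⟨i, ⟨0, h⟩⟩) (Or.inl ⟨rfl, rfl, rfl⟩)
      · exact H (some ⟨i, ⟨j, _⟩⟩) (some ⟨i, ⟨j+1, h⟩⟩) (Or.inr (Or.inl ⟨rfl, by simp [m], rfl⟩))
      · exact (H none (some ⟨0, ⟨L (0 : Fin (N+1)) - 1, by omega⟩⟩) (Or.inr (Or.inr ⟨rfl, rfl, rfl, by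
          simp only [m]; simp at two ⊢; omega⟩))).symm
    · rintro ⟨H1, H2⟩ (_ | ⟨i, j, hj⟩) (_ | ⟨i', j', hj'⟩) hE
      · simp [m, EE] at hE; have := P.two; omega
      · simp [m, EE] at hE
        rcases hE with hE | hE
        · subst hE
          exact (H1 i').1 hj'
        · obtain ⟨hi, hE⟩ := hE
          subst hi
          intro h
          apply H2
          rw [h]
          congr 4
          simp; omega
      · simp [m, EE] at hE
      · simp [m, EE] at hE
        obtain ⟨hi, hE⟩ := hE
        have hi := Fin.ext hi
        subst hi
        subst hE
        exact (H1 i).2 j hj'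
  unfold Sq.ZZ
  rw [← (E.arrowCongr (Equiv.refl C)).sum_comp]
  have step : ∀ κ : M → C, (if (∀ u v, G.Adj u v → (E.arrowCongr (Equiv.refl C) κ) u ≠
      (E.arrowCongr (Equiv.refl C) κ) v) then ∏ v, w ((E.arrowCongr (Equiv.refl C) κ) v) else 0) =
      (fun (p : C × ((i : Fin (N+1)) → Fin (L i) → C)) => w p.1 *
        ((if Chain p.1 (p.2 0) ∧ lastc p.1 (p.2 0) ≠ p.1 then ∏ j, w (p.2 0 j) else 0) *
          ∏ i : Fin N, (if Chain p.1 (p.2 i.succ) then ∏ j, w (p.2 i.succ j) else 0)))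
      (κ none, fun i j => κ (some ⟨i, j⟩)) := by
    intro κ
    have e1 : ∀ u, (E.arrowCongr (Equiv.refl C) κ) u = κ (E.symm u) := fun u => rfl
    simp only [e1]
    rw [E.symm.prod_comp (fun a => w (κ a)), Fintype.prod_option, Fintype.prod_sigma,
      Fin.prod_univ_succ, Finset.prod_ite_zero]
    have hi := hprop κ
    rw [Fin.forall_fin_succ] at hi
    have hi2 : _ ↔ ((_ ∧ ∀ i ∈ (univ : Finset (Fin N)), _) ∧ _) := hi.trans (by
      simp only [Finset.mem_univ, forall_true_left]; exact Iff.rfl)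
    convert ite_aux hi2
  rw [Finset.sum_congr rfl (fun κ _ => step κ)]
  let Q : (M → C) ≃ C × ((i : Fin (N+1)) → Fin (L i) → C) :=
    (Equiv.piOptionEquivProd (β := fun _ => C)).trans
      (Equiv.prodCongr (Equiv.refl _) (Equiv.piCurry (fun _ _ => C)))
  refine (Q.sum_comp (fun p => w p.1 *
        ((if Chain p.1 (p.2 0) ∧ lastc p.1 (p.2 0) ≠ p.1 then ∏ j, w (p.2 0 j) else 0) *
          ∏ i : Fin N, (if Chain p.1 (p.2 i.succ) then ∏ j, w (p.2 i.succ j) else 0)))).trans ?_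
  rw [Fintype.sum_prod_type]
  apply Finset.sum_congr rfl
  intro r _
  dsimp only
  rw [← Finset.mul_sum]
  congr 1
  rw [← (Fin.consEquiv (fun i : Fin (N+1) => Fin (L i) → C)).sum_comp, Fintype.sum_prod_type]
  simp only [Dw, Tw]
  rw [Finset.prod_univ_sum, Finset.sum_mul_sum, Fintype.piFinset_univ]
  apply Finset.sum_congr rfl
  intro g _
  apply Finset.sum_congr rfl
  intro g' _
  congr! 4
  next a b h =>
    have h := eq_of_heq h
    subst h
    rfl

lemma Par.iso {V W : Type*} {G : SimpleGraph V} {H : SimpleGraph W} {v : V} {v' : W}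
    {L L' : ℕ → ℕ} {φ : V → ℕ × ℕ} {φ' : W → ℕ × ℕ} (P : Par G v L φ) (P' : Par H v' L' φ')
    (h0 : L 0 = L' 0) (σ : ℕ ≃ ℕ) (hσ0 : σ 0 = 0) (hσ : ∀ i, L' (σ i) = L i) :
    Nonempty (G ≃g H) := by
  have hσ' : ∀ i, σ i = 0 ↔ i = 0 := fun i => by
    conv_lhs => rw [← hσ0]
    exact σ.injective.eq_iff
  have hv : ∀ u, Val L' (σ (φ u).1, (φ u).2) := by
    intro u
    have := P.val u
    simp only [Val, hσ', hσ] at *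
    exact this
  choose f hf using fun u => P'.surj _ (hv u)
  have hbij : Function.Bijective f := by
    constructor
    · intro a b hab
      have := hf a
      rw [hab, hf b] at this
      simp only [Prod.mk.injEq, EmbeddingLike.apply_eq_iff_eq] at this
      exact P.inj (Prod.ext this.1.symm this.2.symm)
    · intro b
      obtain ⟨u, hu⟩ := P.surj (σ.symm (φ' b).1, (φ' b).2) (by
        have := P'.val b
        have h1 := hσ (σ.symm (φ' b).1)
        have h2 := hσ' (σ.symm (φ' b).1)
        simp only [Val, Equiv.apply_symm_apply] at *
        rw [← h1, ← h2]
        exact this)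
      refine ⟨u, P'.inj ?_⟩
      rw [hf, hu]; simp
  refine ⟨⟨Equiv.ofBijective f hbij, ?_⟩⟩
  intro a b
  simp only [Equiv.ofBijective_apply]
  rw [P.adj, P'.adj, hf, hf]
  simp only [EE, hσ', h0, EmbeddingLike.apply_eq_iff_eq]

/-- matching legs -/
lemma exists_perm (L L' : ℕ → ℕ) (N : ℕ) (hN : ∀ i, N < i → L i = 0) (hN' : ∀ i, N < i → L' i = 0)
    (h : ∀ k, 1 ≤ k → mm (fun i : Fin N => L (i+1)) k = mm (fun i : Fin N => L' (i+1)) k) :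
    ∃ σ : ℕ ≃ ℕ, σ 0 = 0 ∧ ∀ i, i ≠ 0 → L' (σ i) = L i := by
  classical
  let F : (ℕ → ℕ) → ℕ → Option ℕ := fun L i => if i = 0 then none else some (L i)
  have hcard : ∀ (L : ℕ → ℕ), (∀ i, N < i → L i = 0) → ∀ c, 1 ≤ c →
      Finite {i // F L i = some c} ∧ Nat.card {i // F L i = some c} =
      mm (fun i : Fin N => L (i+1)) c - mm (fun i : Fin N => L (i+1)) (c+1) := by
    intro L hN c hc
    have : Nat.card {i // F L i = some c} = #{i : Fin N | L (i+1) = c} ∧ Finite {i // F L i = some c} := by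
      have hb : Function.Bijective (fun i : ({i : Fin N | L (i+1) = c} : Finset (Fin N)) =>
          (⟨i.1.1 + 1, by have := (Finset.mem_filter.mp i.2).2; simp [F, this]⟩ : {i // F L i = some c})) := by
        constructor
        · rintro ⟨a, _⟩ ⟨b, _⟩ hab
          simp only [Subtype.mk.injEq] at hab
          apply Subtype.ext; apply Fin.ext; simp only; omega
        · rintro ⟨i, hi⟩
          simp only [F] at hi
          split_ifs at hi with h0
          simp only [Option.some.injEq] at hi
          have hiN : i ≤ N := by
            by_contra hcc
            have := hN i (by omega); omega
          have e : i - 1 + 1 = i := by omega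
          exact ⟨⟨⟨i - 1, by omega⟩, by simp [e, hi]⟩, by apply Subtype.ext; exact e⟩
      refine ⟨?_, Finite.of_surjective _ hb.2⟩
      rw [← Nat.card_eq_of_bijective _ hb, Nat.card_eq_finsetCard]
    refine ⟨this.2, this.1.trans ?_⟩
    unfold mm
    have hs : ({i : Fin N | c + 1 ≤ L (i+1)} : Finset (Fin N)) ⊆
        ({i : Fin N | c ≤ L (i+1)} : Finset (Fin N)) := by
      intro i; simp only [mem_filter, mem_univ, true_and]; omega
    rw [← Finset.card_sdiff_of_subset hs]
    congr 1
    ext i; simp only [mem_filter, mem_univ, true_and, mem_sdiff]; omega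
  have hinf : ∀ (L : ℕ → ℕ), (∀ i, N < i → L i = 0) → Infinite {i // F L i = some 0} := by
    intro L hN
    refine Infinite.of_injective (fun n : ℕ => (⟨N + 1 + n, ?_⟩ : {i // F L i = some 0})) ?_
    · simp [F, hN (N + 1 + n) (by omega)]
    · intro a b hab
      simp only [Subtype.mk.injEq] at hab; omega
  have hne : ∀ c, Nonempty ({i // F L i = c} ≃ {i // F L' i = c}) := by
    rintro (_ | c)
    · refine ⟨Equiv.subtypeEquivRight ?_⟩
      intro i; simp [F]
    · rcases Nat.eq_zero_or_pos c with rfl | hc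
      · have := hinf L hN
        have := hinf L' hN'
        exact nonempty_equiv_of_countable
      · obtain ⟨f1, c1⟩ := hcard L hN c hc
        obtain ⟨f2, c2⟩ := hcard L' hN' c hc
        rw [h c hc, h (c+1) (by omega), ← c2] at c1
        exact Finite.card_eq.mp c1
  let q := fun c => (hne c).some
  have hq := fun i => Equiv.ofFiberEquiv_map (f := F L) (g := F L') q i
  refine ⟨Equiv.ofFiberEquiv q, ?_, ?_⟩
  · have := hq 0
    simpa [F] using this
  · intro i hi
    have := hq i
    simp only [F, if_neg hi] at this
    split_ifs at this
    simpa using this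

end Sq

namespace Sq

lemma Par.extend {V : Type*} {G : SimpleGraph V} {v u w : V} (hvu : v ≠ u) (hwu : w ≠ u)
    (hw : ∀ x, G.Adj u x ↔ x = w) {L : ℕ → ℕ} {φ : ({u}ᶜ : Set V) → ℕ × ℕ}
    (P : Par (G.induce ({u}ᶜ : Set V)) ⟨v, hvu⟩ L φ) (i : ℕ) (hi : i ≠ 0)
    (hwi : (w = v ∧ L i = 0) ∨ (φ ⟨w, hwu⟩ = (i, L i) ∧ 1 ≤ L i)) :
    ∃ L2 φ2, Par G v L2 φ2 := by
  classical
  let φ2 : V → ℕ × ℕ := fun x => if h : x = u then (i, L i + 1) else φ ⟨x, h⟩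
  have fu : φ2 u = (i, L i + 1) := by simp [φ2]
  have fx : ∀ x (h : x ≠ u), φ2 x = φ ⟨x, h⟩ := fun x h => by simp [φ2, h]
  have hL0 : Function.update L i (L i + 1) 0 = L 0 := Function.update_of_ne hi.symm _ _
  have hLi : Function.update L i (L i + 1) i = L i + 1 := Function.update_self _ _ _
  have hLn : ∀ k, k ≠ i → Function.update L i (L i + 1) k = L k :=
    fun k hk => Function.update_of_ne hk _ _
  have hE : ∀ a b, EE (Function.update L i (L i + 1)) a b ↔ EE L a b := by
    intro a b; simp only [EE, hL0]
  have hne : ∀ y (hy : y ≠ u), φ ⟨y, hy⟩ ≠ (i, L i + 1) := by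
    intro y hy h
    have := P.val ⟨y, hy⟩
    rw [h] at this
    simp only [Val] at this
    omega
  have key : ∀ y (hy : y ≠ u), G.Adj u y ↔
      EE L (i, L i + 1) (φ ⟨y, hy⟩) ∨ EE L (φ ⟨y, hy⟩) (i, L i + 1) := by
    intro y hy
    rw [hw]
    constructor
    · rintro rfl
      right
      rcases hwi with ⟨rfl, h⟩ | ⟨h, h1⟩
      · rw [P.root]; left; exact ⟨rfl, rfl, by simp [h]⟩
      · rw [h]; right; left; exact ⟨rfl, h1, rfl⟩
    · intro h
      have hval := P.val ⟨y, hy⟩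
      have h' : (φ ⟨y, hy⟩ = (0, 0) ∧ L i = 0) ∨ (φ ⟨y, hy⟩ = (i, L i) ∧ 1 ≤ L i) := by
        rcases h with h | h
        · exfalso
          rcases h with h | h | h
          · exact hi h.1
          · obtain ⟨h1, h2, h3⟩ := h
            simp only at h1 h2 h3
            rcases hval with h4 | h4
            · omega
            · rw [← h1] at h4; omega
          · exact hi h.1
        · rcases h with h | h | h
          · obtain ⟨h1, h2, h3⟩ := h
            simp only at h3
            exact Or.inl ⟨Prod.ext h1 h2, by omega⟩
          · obtain ⟨h1, h2, h3⟩ := h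
            simp only at h1 h3
            exact Or.inr ⟨Prod.ext h1 (by simp only; omega), by omega⟩
          · exact absurd h.2.2.1 hi
      have inj : ∀ z (hz : z ≠ u), φ ⟨y, hy⟩ = φ ⟨z, hz⟩ → y = z := fun z hz h => by
        exact congrArg Subtype.val (P.inj h)
      rcases h' with ⟨h1, h2⟩ | ⟨h1, h2⟩ <;> rcases hwi with ⟨h3, h4⟩ | ⟨h3, h4⟩
      · rw [h3]; exact inj v hvu (h1.trans P.root.symm)
      · omega
      · omega
      · exact inj w hwu (h1.trans h3.symm)
  refine ⟨Function.update L i (L i + 1), φ2, ?_, ?_, ?_, ?_, ?_, ?_, ?_⟩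
  · intro x y h
    by_cases hx : x = u <;> by_cases hy : y = u
    · rw [hx, hy]
    · rw [hx, fu, fx y hy] at h; exact absurd h.symm (hne y hy)
    · rw [hy, fu, fx x hx] at h; exact absurd h (hne x hx)
    · rw [fx x hx, fx y hy] at h
      exact congrArg Subtype.val (P.inj h)
  · intro x
    by_cases hx : x = u
    · rw [hx, fu]; right; simp [hLi]
    · rw [fx x hx]
      rcases P.val ⟨x, hx⟩ with h | h
      · exact Or.inl h
      · right
        by_cases hk : (φ ⟨x, hx⟩).1 = i
        · rw [hk] at h ⊢; rw [hLi]; omega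
        · rw [hLn _ hk]; exact h
  · rintro ⟨a, b⟩ h
    by_cases hab : (a, b) = (i, L i + 1)
    · exact ⟨u, fu.trans hab.symm⟩
    · have : Val L (a, b) := by
        rcases h with h | h
        · exact Or.inl h
        · right
          simp only at h ⊢
          by_cases hk : a = i
          · subst hk; rw [hLi] at h
            simp at hab; omega
          · rwa [hLn _ hk] at h
      obtain ⟨⟨x, hx⟩, hφ⟩ := P.surj _ this
      exact ⟨x, (fx x hx).trans hφ⟩
  · intro x y
    simp only [hE]
    by_cases hx : x = u <;> by_cases hy : y = u
    · subst hx; subst hy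
      rw [fu]
      simp [EE, hi]
    · subst hx
      rw [fu, fx y hy]; exact key y hy
    · subst hy
      rw [fu, fx x hx, G.adj_comm, or_comm]; exact key x hx
    · rw [fx x hx, fx y hy]
      exact P.adj ⟨x, hx⟩ ⟨y, hy⟩
  · rw [hL0]; exact P.two
  · obtain ⟨N, hN⟩ := P.fin
    refine ⟨max N i, fun k hk => ?_⟩
    rw [hLn k (by omega)]
    exact hN k (by omega)
  · rw [fx v hvu]; exact P.root

/-- a non-root vertex which is not a leg end has two neighbours -/
lemma Par.two_nbrs {V : Type*} {G : SimpleGraph V} {v : V} {L : ℕ → ℕ} {φ : V → ℕ × ℕ}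
    (P : Par G v L φ) (w : V) (hw : w ≠ v) (h : ¬ ((φ w).1 ≠ 0 ∧ (φ w).2 = L (φ w).1)) :
    ∃ a b, a ≠ b ∧ G.Adj w a ∧ G.Adj w b := by
  have h0 : ¬ ((φ w).1 = 0 ∧ (φ w).2 = 0) := by
    intro hh
    apply hw
    apply P.inj
    rw [P.root]
    exact Prod.ext hh.1 hh.2
  have hv : 1 ≤ (φ w).2 ∧ (φ w).2 ≤ L (φ w).1 := (P.val w).resolve_left h0
  -- predecessor
  obtain ⟨a, ha, haw⟩ : ∃ a, ((φ a).1 = 0 ∧ (φ a).2 = 0 ∧ (φ w).2 = 1 ∨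
      (φ a).1 = (φ w).1 ∧ 1 ≤ (φ a).2 ∧ (φ w).2 = (φ a).2 + 1) ∧ G.Adj w a := by
    by_cases h1 : (φ w).2 = 1
    · refine ⟨v, ?_, (P.adj _ _).2 (Or.inr ?_)⟩
      · left; rw [P.root]; simp [h1]
      · left; rw [P.root]; simp [h1]
    · obtain ⟨a, ha⟩ := P.surj ((φ w).1, (φ w).2 - 1)
        (Or.inr (show 1 ≤ (φ w).2 - 1 ∧ (φ w).2 - 1 ≤ L (φ w).1 by omega))
      have h2 : (φ a).1 = (φ w).1 ∧ 1 ≤ (φ a).2 ∧ (φ w).2 = (φ a).2 + 1 := by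
        rw [ha]; refine ⟨rfl, ?_, ?_⟩ <;> dsimp only <;> omega
      exact ⟨a, Or.inr h2, (P.adj _ _).2 (Or.inr (Or.inr (Or.inl h2)))⟩
  by_cases hlt : (φ w).2 < L (φ w).1
  · obtain ⟨b, hb⟩ := P.surj ((φ w).1, (φ w).2 + 1)
      (Or.inr (show 1 ≤ (φ w).2 + 1 ∧ (φ w).2 + 1 ≤ L (φ w).1 by omega))
    refine ⟨a, b, ?_, haw, (P.adj _ _).2 (Or.inl (Or.inr (Or.inl ?_)))⟩
    · rintro rfl
      rw [hb] at ha
      simp only at ha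
      omega
    · rw [hb]; exact ⟨rfl, hv.1, rfl⟩
  · have hi : (φ w).1 = 0 := by
      by_contra hc
      exact h ⟨hc, by omega⟩
    rw [hi] at hlt hv
    have := P.two
    refine ⟨a, v, ?_, haw, (P.adj _ _).2 (Or.inr (Or.inr (Or.inr ?_)))⟩
    · rintro rfl
      rw [P.root] at ha
      simp only at ha
      omega
    · rw [P.root]; exact ⟨rfl, rfl, hi, by omega⟩

lemma Par.cycle {V : Type*} [Finite V] {G : SimpleGraph V} (v : V) (hG : G.Connected)
    (hd : ∀ u, (G.neighborSet u).ncard = 2) (hE : Nat.card G.edgeSet = Nat.card V) :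
    ∃ L φ, Par G v L φ := by
  classical
  have hac : ¬ G.IsAcyclic := by
    intro h
    have := (isTree_iff_connected_and_card.1 (⟨hG, h⟩ : G.IsTree)).2
    omega
  obtain ⟨c, p, hp⟩ : ∃ (c : V) (p : G.Walk c c), p.IsCycle := by
    unfold SimpleGraph.IsAcyclic at hac
    push Not at hac
    exact hac
  have hadj : ∀ {c : V} {p : G.Walk c c}, p.IsCycle → ∀ x ∈ p.support, ∀ y, G.Adj x y →
      p.toSubgraph.Adj x y := by
    intro c p hp x hx y hxy
    have h1 : p.toSubgraph.neighborSet x ⊆ G.neighborSet x := fun z hz => hz.adj_sub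
    have h2 := Set.eq_of_subset_of_ncard_le h1
      (by rw [hd, hp.ncard_neighborSet_toSubgraph_eq_two hx]) (Set.toFinite _)
    have : y ∈ p.toSubgraph.neighborSet x := by rw [h2]; exact hxy
    exact this
  have hsup : ∀ {c : V} {p : G.Walk c c}, p.IsCycle → ∀ x, x ∈ p.support := by
    intro c p hp x
    by_contra hx
    obtain ⟨q⟩ := hG.preconnected c x
    obtain ⟨d, -, h1, h2⟩ := q.exists_boundary_dart {z | z ∈ p.support} p.start_mem_support hx
    apply h2
    have := (hadj hp _ h1 _ d.adj).snd_mem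
    exact (Walk.mem_verts_toSubgraph p).1 this
  have hq := hp.rotate (hsup hp v)
  generalize p.rotate v (hsup hp v) = q at hq
  have h3 := hq.three_le_length
  have hidx : ∀ x, ∃ n, n < q.length ∧ q.getVert n = x := by
    intro x
    obtain ⟨n, h1, h2⟩ := Walk.mem_support_iff_exists_getVert.1 (hsup hq x)
    rcases h2.lt_or_eq with h | h
    · exact ⟨n, h, h1⟩
    · refine ⟨0, by omega, ?_⟩
      rw [← h1, h]; simp
  choose idx hlt hidx using hidx
  have hinj : ∀ a b, a < q.length → b < q.length → q.getVert a = q.getVert b → a = b := by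
    intro a b ha hb h
    exact hq.getVert_injOn' (by simp only [Set.mem_ofPred_eq]; omega)
      (by simp only [Set.mem_ofPred_eq]; omega) h
  have hid2 : ∀ a, a < q.length → idx (q.getVert a) = a := fun a ha =>
    hinj _ _ (hlt _) ha (hidx _)
  have hv : idx v = 0 := hinj _ _ (hlt _) (by omega) (by rw [hidx]; simp)
  refine ⟨fun i => if i = 0 then q.length - 1 else 0, fun x => (0, idx x), ?_, ?_, ?_, ?_, ?_, ?_, ?_⟩
  · intro x y h
    simp only [Prod.mk.injEq, true_and] at h
    rw [← hidx x, ← hidx y, h]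
  · intro u
    have := hlt u
    simp only [Val, if_true, true_and]; omega
  · rintro ⟨a, b⟩ h
    have : a = 0 ∧ b < q.length := by
      simp only [Val] at h
      split_ifs at h <;> omega
    refine ⟨q.getVert b, ?_⟩
    rw [hid2 b this.2, this.1]
  · intro x y
    have hA : G.Adj x y ↔ q.toSubgraph.Adj x y := ⟨hadj hq x (hsup hq x) y, fun h => h.adj_sub⟩
    rw [hA, Walk.toSubgraph_adj_iff]
    simp only [EE, if_true, true_and]
    have hx := hlt x
    have hy := hlt y
    have hs : ∀ i, i < q.length → idx (q.getVert (i + 1)) = if i + 1 = q.length then 0 else i + 1 := by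
      intro i hi
      split_ifs with h
      · rw [h]; simpa using hv
      · exact hid2 _ (by omega)
    constructor
    · rintro ⟨i, h, hi⟩
      have e1 := hid2 i hi
      have e2 := hs i hi
      rcases Sym2.eq_iff.1 h with ⟨h1, h2⟩ | ⟨h1, h2⟩ <;> rw [h1] at e1 <;> rw [h2] at e2 <;>
        split_ifs at e2 <;> omega
    · intro h
      have aux : ∀ x y, idx y = idx x + 1 ∨ (idx y = 0 ∧ idx x = q.length - 1) →
          q.getVert (idx x) = x ∧ q.getVert (idx x + 1) = y := by
        rintro x y (h | h)
        · exact ⟨hidx x, by rw [← h]; exact hidx y⟩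
        · refine ⟨hidx x, ?_⟩
          have e : idx x + 1 = q.length := by omega
          rw [e, ← hidx y, h.1]; simp
      by_cases hc : idx y = idx x + 1 ∨ (idx y = 0 ∧ idx x = q.length - 1)
      · obtain ⟨h1, h2⟩ := aux x y hc
        exact ⟨idx x, by rw [h1, h2], hx⟩
      · obtain ⟨h1, h2⟩ := aux y x (by omega)
        exact ⟨idx y, by rw [h1, h2, Sym2.eq_swap], hy⟩
  · simp only [if_true]; omega
  · exact ⟨0, fun i hi => by simp; omega⟩
  · simp [hv]

lemma exists_par (n : ℕ) : ∀ {V : Type*} [Finite V] (G : SimpleGraph V) (v : V), Nat.card V = n →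
    G.Connected → Nat.card G.edgeSet = Nat.card V →
    (∀ u, u ≠ v → (G.neighborSet u).ncard ≤ 2) → ∃ L φ, Par G v L φ := by
  induction n with
  | zero =>
    intro V _ G v hV
    have : Nonempty V := ⟨v⟩
    have := Nat.card_pos (α := V)
    omega
  | succ n ih =>
    intro V _ G v hV hG hE hd
    classical
    have := Fintype.ofFinite V
    have hdeg : ∀ u, (G.neighborSet u).ncard = G.degree u := fun u => by
      rw [← Nat.card_coe_set_eq, Nat.card_eq_fintype_card, card_neighborSet_eq_degree]
    have hEf : #G.edgeFinset = Fintype.card V := by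
      rw [← Nat.card_eq_fintype_card, ← hE, Nat.card_eq_fintype_card, edgeFinset_card]
    by_cases hl : ∃ u, u ≠ v ∧ G.degree u = 1
    · obtain ⟨u, huv, hu⟩ := hl
      have hconn := hG.induce_compl_singleton_of_degree_eq_one hu
      have hcard : Nat.card ({u}ᶜ : Set V) = n := by
        rw [Nat.card_coe_set_eq, Set.ncard_compl, Set.ncard_singleton, hV]; rfl
      have hedges : Nat.card (G.induce ({u}ᶜ : Set V)).edgeSet = Nat.card ({u}ᶜ : Set V) := by
        have h1 := G.card_edgeFinset_induce_compl_singleton u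
        rw [card_edgeFinset_deleteIncidenceSet, hu, hEf, ← Nat.card_eq_fintype_card, hV] at h1
        rw [hcard, Nat.card_eq_fintype_card, ← edgeFinset_card]
        rw [Nat.add_sub_cancel] at h1
        convert h1
      obtain ⟨w, hw, hw2⟩ := degree_eq_one_iff_existsUnique_adj.1 hu
      have hwu : w ≠ u := fun h => G.loopless.irrefl u (h ▸ hw)
      obtain ⟨L, φ, P⟩ := ih (G.induce ({u}ᶜ : Set V)) ⟨v, huv.symm⟩ hcard hconn hedges (by
        rintro ⟨x, hx⟩ hxv
        have hxv' : x ≠ v := fun h => hxv (Subtype.ext h)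
        refine le_trans ?_ (hd x hxv')
        refine Set.ncard_le_ncard_of_injOn (fun z => z.1) (fun z hz => hz)
          Subtype.val_injective.injOn (Set.toFinite _))
      have hw' : ∀ x, G.Adj u x ↔ x = w := fun x => ⟨fun h => hw2 x h, fun h => h ▸ hw⟩
      by_cases hwv : w = v
      · obtain ⟨N, hN⟩ := P.fin
        exact P.extend huv.symm hwu hw' (N + 1) (by omega) (Or.inl ⟨hwv, hN _ (by omega)⟩)
      · by_cases hend : (φ ⟨w, hwu⟩).1 ≠ 0 ∧ (φ ⟨w, hwu⟩).2 = L (φ ⟨w, hwu⟩).1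
        · refine P.extend huv.symm hwu hw' (φ ⟨w, hwu⟩).1 hend.1 (Or.inr ⟨Prod.ext rfl hend.2, ?_⟩)
          rcases P.val ⟨w, hwu⟩ with h | h
          · exact absurd h.1 hend.1
          · omega
        · exfalso
          obtain ⟨⟨a, ha⟩, ⟨b, hb⟩, hab, hwa, hwb⟩ := P.two_nbrs ⟨w, hwu⟩
            (fun h => hwv (congrArg Subtype.val h)) hend
          have h1 := hd w hwv
          have hab' : a ≠ b := fun h => hab (Subtype.ext h)
          have h2 : ({u, a, b} : Set V).ncard = 3 :=
            Set.ncard_eq_three.2 ⟨u, a, b, fun h => ha h.symm, fun h => hb h.symm, hab', rfl⟩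
          have h3 : ({u, a, b} : Set V) ⊆ G.neighborSet w := by
            rintro z (rfl | rfl | rfl)
            · exact hw.symm
            · exact hwa
            · exact hwb
          have := Set.ncard_le_ncard h3 (Set.toFinite _)
          omega
    · push Not at hl
      have hnt : Nontrivial V := by
        by_contra hc
        rw [not_nontrivial_iff_subsingleton] at hc
        have h1 : #G.edgeFinset = 0 := by
          rw [Finset.card_eq_zero, edgeFinset_eq_empty]
          exact Subsingleton.elim _ _
        rw [h1] at hEf
        rw [Nat.card_eq_fintype_card] at hV
        omega
      have h2 : ∀ u, u ≠ v → G.degree u = 2 := by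
        intro u hu
        have h1 := hG.preconnected.degree_pos_of_nontrivial u
        have := hl u hu
        have := hd u hu
        rw [hdeg] at this
        omega
      have hs := G.sum_degrees_eq_twice_card_edges
      rw [hEf, ← Finset.add_sum_erase _ _ (Finset.mem_univ v),
        Finset.sum_congr rfl (fun u hu => h2 u (Finset.ne_of_mem_erase hu))] at hs
      simp only [Finset.sum_const, smul_eq_mul, Finset.card_erase_of_mem (Finset.mem_univ v),
        Finset.card_univ] at hs
      rw [Nat.card_eq_fintype_card] at hV
      refine Par.cycle v hG (fun u => ?_) hE
      rw [hdeg]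
      by_cases hu : u = v
      · rw [hu]; omega
      · exact h2 u hu

lemma squid_par {V : Type*} [Fintype V] (G : SimpleGraph V) [DecidableRel G.Adj] (hG : IsSquid G) :
    ∃ v L φ, Par G v L φ := by
  obtain ⟨hc, hE, v, hv, huniq⟩ := hG
  obtain ⟨L, φ, P⟩ := exists_par (Nat.card V) G v rfl hc (by rw [hE, Nat.card_eq_fintype_card])
    (fun u hu => by
      rw [← Nat.card_coe_set_eq, Nat.card_eq_fintype_card, card_neighborSet_eq_degree]
      by_contra hcon
      exact hu (huniq u (by simpa using hcon)))
  exact ⟨v, L, φ, P⟩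

end Sq

/-- Two squids with equal chromatic symmetric functions are isomorphic. -/
theorem stmt_18 [Fintype V] [Fintype W] (G : SimpleGraph V) (H : SimpleGraph W)
    [DecidableRel G.Adj] [DecidableRel H.Adj]
    (hG : IsSquid G) (hH : IsSquid H) (hX : SameCSF G H) :
    Nonempty (G ≃g H) := by
  obtain ⟨v, L, φ, P⟩ := Sq.squid_par G hG
  obtain ⟨v', L', φ', P'⟩ := Sq.squid_par H hH
  obtain ⟨N1, hN1⟩ := P.fin
  obtain ⟨N2, hN2⟩ := P'.fin
  have hN : ∀ i, max N1 N2 < i → L i = 0 := fun i hi => hN1 i (by omega)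
  have hN' : ∀ i, max N1 N2 < i → L' i = 0 := fun i hi => hN2 i (by omega)
  generalize max N1 N2 = N at hN hN'
  obtain ⟨h0, hm⟩ := Sq.arith (L 0) (L' 0) (fun i : Fin N => L (i + 1))
    (fun i : Fin N => L' (i + 1)) P.two P'.two (fun t _ x y => by
      rw [← Sq.FF_eq, ← Sq.FF_eq, ← P.ZZ N hN, ← P'.ZZ N hN']
      exact Sq.ZZ_eq G H hX _)
  obtain ⟨σ, hσ0, hσ⟩ := Sq.exists_perm L L' N hN hN' hm
  refine P.iso P' h0 σ hσ0 (fun i => ?_)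
  by_cases hi : i = 0
  · rw [hi, hσ0, h0]
  · exact hσ i hi
end

section
/- Let G and H be crabs, i.e., finite connected simple graphs each containing exactly one cycle and such that every vertex not lying on the cycle is a leaf (has degree 1). Suppose moreover that in each of G and H the degrees of the non-leaf vertices are pairwise distinct and all greater than 2. If G and H have equal chromatic symmetric functions—for every finitely supported function α : ℕ → ℕ, the number of proper colorings κ : V(G) → ℕ with #κ⁻¹({i}) = α(i) for all i equals the corresponding number for H—then G and H are isomorphic as graphs. -/
open SimpleGraph Finset

variable {V : Type*} {W : Type*}

/-- A crab: a finite connected simple graph containing exactly one cycle (equivalently,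
connected with as many edges as vertices) in which every vertex not lying on the cycle
(i.e. through which no cycle passes) is a leaf. -/
def IsCrab [Fintype V] (G : SimpleGraph V) [DecidableRel G.Adj] : Prop :=
  G.Connected ∧ Nat.card G.edgeSet = Fintype.card V ∧
    ∀ v : V, ¬(∃ c : G.Walk v v, c.IsCycle) → G.degree v = 1
section CrabProof
open scoped Classical

/-- Multiset of fibre sizes of a map. -/
noncomputable def ftype {V β : Type*} [Fintype V] (f : V → β) : Multiset ℕ :=
  (univ.image f).val.map (fun b => #{v | f v = b})

lemma ftype_congr {V β γ : Type*} [Fintype V] (f : V → β) (g : V → γ)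
    (h : ∀ x y, f x = f y ↔ g x = g y) : ftype f = ftype g := by
  rcases isEmpty_or_nonempty V with hV | hV
  · simp [ftype]
  obtain ⟨φ, hφ⟩ : ∃ φ : β → γ, ∀ x, φ (f x) = g x := by
    refine ⟨fun b => g (Function.invFun f b), fun x => ?_⟩
    rw [← h]
    exact Function.invFun_eq ⟨x, rfl⟩
  have him : univ.image g = (univ.image f).image φ := by
    rw [Finset.image_image]
    congr 1
    funext x
    exact (hφ x).symm
  have hinj : Set.InjOn φ (univ.image f : Finset β) := by
    intro a ha b hb hab
    simp only [coe_image, coe_univ, Set.image_univ, Set.mem_range] at ha hb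
    obtain ⟨x, rfl⟩ := ha
    obtain ⟨y, rfl⟩ := hb
    rw [hφ, hφ] at hab
    exact (h x y).2 hab
  unfold ftype
  rw [him, Finset.image_val_of_injOn hinj, Multiset.map_map]
  apply Multiset.map_congr rfl
  intro b hb
  simp only [mem_val, mem_image, mem_univ, true_and] at hb
  obtain ⟨x, rfl⟩ := hb
  simp only [Function.comp, hφ]
  congr 1
  ext v
  simp [h]

/-- number of ways to distribute parts `w` to colours with content `α`. -/
noncomputable def Mw {ι : Type*} [Fintype ι] (w : ι → ℕ) (α : ℕ →₀ ℕ) : ℕ :=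
  Nat.card {g : ι → ℕ // ∀ i, (∑ b, if g b = i then w b else 0) = α i}

noncomputable def Mm (l : Multiset ℕ) (α : ℕ →₀ ℕ) : ℕ :=
  Mw (fun i : Fin l.toList.length => l.toList.get i) α

lemma exists_equiv_of_map_eq {ι κ γ : Type*} [Fintype ι] [Fintype κ] (w : ι → γ) (w' : κ → γ)
    (h : ∀ c, #{a | w a = c} = #{b | w' b = c}) :
    ∃ e : ι ≃ κ, ∀ a, w' (e a) = w a := by
  have : ∀ c, Nonempty ({a // w a = c} ≃ {b // w' b = c}) := by
    intro c
    rw [← Fintype.card_eq, Fintype.card_subtype, Fintype.card_subtype]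
    exact h c
  have e : ∀ c, ({a // w a = c} ≃ {b // w' b = c}) := fun c => (this c).some
  exact ⟨Equiv.ofFiberEquiv e, fun a => Equiv.ofFiberEquiv_map e a⟩

lemma Mw_congr {ι κ : Type*} [Fintype ι] [Fintype κ] (w : ι → ℕ) (w' : κ → ℕ)
    (h : univ.val.map w = univ.val.map w') (α : ℕ →₀ ℕ) : Mw w α = Mw w' α := by
  obtain ⟨e, he⟩ := exists_equiv_of_map_eq w w' (by
    intro c
    have := congrArg (Multiset.count c) h
    rw [Multiset.count_map, Multiset.count_map] at this
    simpa [Finset.card, Finset.filter, eq_comm] using this)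
  unfold Mw
  apply Nat.card_congr
  refine Equiv.subtypeEquiv (Equiv.arrowCongr e (Equiv.refl ℕ)) ?_
  intro g
  apply forall_congr'
  intro i
  rw [← Equiv.sum_comp e]
  simp [he]

lemma map_toList_get (l : Multiset ℕ) :
    (univ : Finset (Fin l.toList.length)).val.map (fun i => l.toList.get i) = l := by
  conv_rhs => rw [← Multiset.coe_toList l]
  rw [Fin.univ_val_map, List.ofFn_get]

lemma Mm_eq {ι : Type*} [Fintype ι] (w : ι → ℕ) (α : ℕ →₀ ℕ) :
    Mm (univ.val.map w) α = Mw w α :=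
  Mw_congr _ _ (map_toList_get _) α

lemma Mw_support {ι : Type*} [Fintype ι] (w : ι → ℕ) (hw : ∀ b, 0 < w b) (α : ℕ →₀ ℕ)
    (h : Mw w α ≠ 0) : #α.support ≤ Fintype.card ι ∧
      (#α.support = Fintype.card ι → α.support.val.map α = univ.val.map w) := by
  have : Nonempty {g : ι → ℕ // ∀ i, (∑ b, if g b = i then w b else 0) = α i} := by
    by_contra hn
    rw [not_nonempty_iff] at hn
    exact h (Nat.card_of_isEmpty)
  obtain ⟨g, hg⟩ := this
  have hs : α.support = univ.image g := by
    ext i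
    rw [Finsupp.mem_support_iff, ← hg]
    simp only [ne_eq, sum_eq_zero_iff, mem_univ, ite_eq_right_iff, forall_const, not_forall,
      mem_image, true_and]
    constructor
    · rintro ⟨b, hb, _⟩; exact ⟨b, hb⟩
    · rintro ⟨b, hb⟩; exact ⟨b, hb, (hw b).ne'⟩
  refine ⟨by rw [hs]; exact card_image_le, fun hc => ?_⟩
  have hinj : Function.Injective g := by
    rw [hs] at hc
    exact Set.injOn_univ.1 (by simpa using Finset.card_image_iff.1 (hc.trans (card_univ).symm))
  rw [hs, Finset.image_val_of_injOn hinj.injOn, Multiset.map_map]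
  apply Multiset.map_congr rfl
  intro b _
  simp only [Function.comp]
  rw [← hg]
  simp [hinj.eq_iff]

lemma Mm_support (l : Multiset ℕ) (hl : ∀ a ∈ l, 0 < a) (α : ℕ →₀ ℕ) (h : Mm l α ≠ 0) :
    #α.support ≤ l.card ∧ (#α.support = l.card → α.support.val.map α = l) := by
  have := Mw_support (fun i : Fin l.toList.length => l.toList.get i)
    (fun i => hl _ (by rw [← Multiset.mem_toList]; exact List.get_mem _ _)) α h
  rw [map_toList_get] at this
  simpa using this

lemma finite_Mw {ι : Type*} [Fintype ι] (w : ι → ℕ) (hw : ∀ b, 0 < w b) (α : ℕ →₀ ℕ) :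
    Finite {g : ι → ℕ // ∀ i, (∑ b, if g b = i then w b else 0) = α i} := by
  apply Set.Finite.to_subtype
  apply (Set.Finite.pi (fun _ : ι => α.support.finite_toSet)).subset
  intro g hg
  simp only [Set.mem_pi, Set.mem_univ, mem_coe, Finsupp.mem_support_iff, forall_const]
  intro b hb
  have h2 := hg (g b)
  rw [hb, sum_eq_zero_iff] at h2
  have := h2 b (mem_univ _)
  simp at this
  exact (hw b).ne' this

lemma exists_content (l : Multiset ℕ) (hl : ∀ a ∈ l, 0 < a) :
    ∃ α : ℕ →₀ ℕ, #α.support = l.card ∧ Mm l α ≠ 0 := by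
  set w : Fin l.toList.length → ℕ := fun i => l.toList.get i with hw
  have hpos : ∀ i, 0 < w i :=
    fun i => hl _ (by rw [← Multiset.mem_toList]; exact List.get_mem _ _)
  let α : ℕ →₀ ℕ := Finsupp.onFinset (range l.toList.length)
    (fun i => if h : i < l.toList.length then w ⟨i, h⟩ else 0) (by
      intro i hi
      by_contra hc
      simp only [mem_range] at hc
      exact hi (dif_neg hc))
  have hs : α.support = range l.toList.length := by
    ext i
    rw [Finsupp.mem_support_iff, mem_range]
    constructor
    · intro hi
      by_contra hc
      exact hi (dif_neg hc)
    · intro hi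
      simp only [α, Finsupp.onFinset_apply, hi, dite_true]
      exact (hpos _).ne'
  refine ⟨α, by rw [hs]; simp, ?_⟩
  have := finite_Mw w hpos α
  have hne : Nonempty {g : Fin l.toList.length → ℕ //
      ∀ i, (∑ b, if g b = i then w b else 0) = α i} := by
    refine ⟨⟨fun i => i.1, fun i => ?_⟩⟩
    by_cases hi : i < l.toList.length
    · simp only [α, Finsupp.onFinset_apply, hi, dite_true]
      rw [Finset.sum_eq_single ⟨i, hi⟩]
      · simp
      · intro b _ hb
        rw [if_neg]
        intro h
        exact hb (Fin.ext h)
      · simp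
    · simp only [α, Finsupp.onFinset_apply, hi, dite_false]
      apply Finset.sum_eq_zero
      intro b _
      rw [if_neg]
      intro h
      exact hi (h ▸ b.2)
  exact (Nat.card_pos).ne'

lemma card_const_eq {V β : Type*} [Fintype V] (f : V → β) (α : ℕ →₀ ℕ) :
    Nat.card {κ : V → ℕ // (∀ x y, f x = f y → κ x = κ y) ∧ ∀ i, #{v | κ v = i} = α i}
      = Mm (ftype f) α := by
  have h0 : ftype f = (univ : Finset (univ.image f)).val.map
      (fun b : univ.image f => #{v | f v = b.1}) := by
    unfold ftype
    rw [Finset.univ_eq_attach, Finset.attach_val]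
    exact (Multiset.attach_map_val' _ _).symm
  rw [h0, Mm_eq]
  unfold Mw
  let F : V → univ.image f := fun v => ⟨f v, mem_image_of_mem _ (mem_univ _)⟩
  have hF : Function.Surjective F := by
    rintro ⟨b, hb⟩
    obtain ⟨v, _, rfl⟩ := mem_image.1 hb
    exact ⟨v, rfl⟩
  have key : ∀ (g : univ.image f → ℕ) (i : ℕ), #{v | g (F v) = i} =
      ∑ b, if g b = i then #{v | f v = b.1} else 0 := by
    intro g i
    rw [Finset.card_eq_sum_card_fiberwise (f := F) (t := univ) (by simp)]
    apply Finset.sum_congr rfl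
    intro b _
    split_ifs with h
    · congr 1
      ext v
      simp only [mem_filter, mem_univ, true_and, F, Subtype.ext_iff]
      constructor
      · exact fun h => h.2
      · intro hv
        refine ⟨?_, hv⟩
        rw [← h]
        congr 1
        exact Subtype.ext hv
    · rw [Finset.card_eq_zero, Finset.filter_eq_empty_iff]
      intro v hv hb
      simp only [mem_filter, mem_univ, true_and] at hv
      rw [hb] at hv
      exact h hv
  symm
  apply Nat.card_congr
  refine Equiv.ofBijective (fun g => ⟨fun v => g.1 (F v), fun x y h => ?_, fun i => ?_⟩) ⟨?_, ?_⟩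
  · have : F x = F y := Subtype.ext h
    simp only [this]
  · rw [key]; exact g.2 i
  · intro g g' h
    apply Subtype.ext
    funext b
    obtain ⟨v, rfl⟩ := hF b
    exact congrFun (congrArg Subtype.val h) v
  · rintro ⟨κ, h1, h2⟩
    have hk : ∀ v, κ (Function.surjInv hF (F v)) = κ v := by
      intro v
      apply h1
      exact congrArg Subtype.val (Function.surjInv_eq hF (F v))
    refine ⟨⟨fun b => κ (Function.surjInv hF b), fun i => ?_⟩, ?_⟩
    · rw [← key, ← h2]
      simp only [hk]
    · apply Subtype.ext
      funext v
      exact hk v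

/-- component type of an edge set -/
noncomputable def ctype {V : Type*} [Fintype V] (S : Finset (Sym2 V)) : Multiset ℕ :=
  ftype (fromEdgeSet (S : Set (Sym2 V))).connectedComponentMk

lemma const_iff {V : Type*} (S : Finset (Sym2 V)) {γ : Type*} (κ : V → γ) :
    (∀ x y, (fromEdgeSet (S : Set (Sym2 V))).connectedComponentMk x =
      (fromEdgeSet (S : Set (Sym2 V))).connectedComponentMk y → κ x = κ y) ↔
    ∀ x y, s(x, y) ∈ S → κ x = κ y := by
  constructor
  · intro h x y hxy
    by_cases hne : x = y
    · rw [hne]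
    apply h
    apply ConnectedComponent.connectedComponentMk_eq_of_adj
    rw [fromEdgeSet_adj]
    exact ⟨hxy, hne⟩
  · intro h x y hxy
    rw [ConnectedComponent.eq] at hxy
    obtain ⟨p⟩ := hxy
    induction p with
    | nil => rfl
    | cons hadj p ih =>
      rw [fromEdgeSet_adj] at hadj
      exact (h _ _ hadj.1).trans ih

lemma ctype_pos {V : Type*} [Fintype V] (S : Finset (Sym2 V)) : ∀ a ∈ ctype S, 0 < a := by
  intro a ha
  simp only [ctype, ftype, Multiset.mem_map, mem_val, mem_image, mem_univ, true_and] at ha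
  obtain ⟨b, ⟨v, rfl⟩, rfl⟩ := ha
  rw [Finset.card_pos]
  exact ⟨v, by simp⟩

lemma finite_content {V : Type*} [Fintype V] (α : ℕ →₀ ℕ) :
    {κ : V → ℕ | ∀ i, #{v | κ v = i} = α i}.Finite := by
  apply (Set.Finite.pi (fun _ : V => α.support.finite_toSet)).subset
  intro g hg
  simp only [Set.mem_pi, Set.mem_univ, mem_coe, Finsupp.mem_support_iff, forall_const]
  intro b hb
  have h2 := hg (g b)
  rw [hb, Finset.card_eq_zero, Finset.filter_eq_empty_iff] at h2
  exact h2 (mem_univ b) rfl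

lemma card_proper {V : Type*} [Fintype V] (G : SimpleGraph V) (α : ℕ →₀ ℕ) :
    (Nat.card {κ : V → ℕ // (∀ u w : V, G.Adj u w → κ u ≠ κ w) ∧
        ∀ i : ℕ, (κ ⁻¹' {i}).ncard = α i} : ℤ) =
      ∑ S ∈ G.edgeFinset.powerset, (-1) ^ #S * (Mm (ctype S) α : ℤ) := by
  have hnc : ∀ (κ : V → ℕ) i, (κ ⁻¹' {i}).ncard = #{v | κ v = i} := by
    intro κ i
    rw [← Set.ncard_coe_finset]
    congr 1
    ext v
    simp
  set K : Finset (V → ℕ) := (finite_content (V := V) α).toFinset with hK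
  have memK : ∀ κ, κ ∈ K ↔ ∀ i, #{v | κ v = i} = α i := by
    intro κ; simp [hK]
  let mono : (V → ℕ) → Finset (Sym2 V) := fun κ =>
    G.edgeFinset.filter (fun e => ∀ x y, e = s(x, y) → κ x = κ y)
  have e1 : Nat.card {κ : V → ℕ // (∀ u w : V, G.Adj u w → κ u ≠ κ w) ∧
        ∀ i : ℕ, (κ ⁻¹' {i}).ncard = α i} = #(K.filter (fun κ => mono κ = ∅)) := by
    apply Nat.subtype_card
    intro κ
    rw [mem_filter, memK]
    simp only [hnc, mono]
    rw [and_comm]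
    apply and_congr_left
    intro _
    rw [Finset.filter_eq_empty_iff]
    constructor
    · intro h u w huw hk
      refine h (x := s(u, w)) (by simpa using huw) ?_
      intro x y hxy
      rw [Sym2.eq_iff] at hxy
      rcases hxy with ⟨rfl, rfl⟩ | ⟨rfl, rfl⟩
      · exact hk
      · exact hk.symm
    · intro h e he hk
      induction e using Sym2.ind with
      | _ x y => exact h x y (by simpa using he) (hk x y rfl)
  have e2 : ∀ S ∈ G.edgeFinset.powerset, Mm (ctype S) α = #(K.filter (fun κ => S ⊆ mono κ)) := by
    intro S hS
    rw [mem_powerset] at hS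
    rw [ctype, ← card_const_eq]
    apply Nat.subtype_card
    intro κ
    rw [mem_filter, memK, const_iff, and_comm]
    apply and_congr_left
    intro _
    simp only [mono]
    constructor
    · intro h x y hxy
      exact (mem_filter.1 (h hxy)).2 x y rfl
    · intro h e he
      rw [mem_filter]
      refine ⟨hS he, ?_⟩
      rintro x y rfl
      exact h x y he
  rw [e1, Finset.sum_congr rfl (fun S hS => by rw [e2 S hS])]
  rw [Finset.card_filter]
  push_cast
  have e3 : ∀ κ, (if mono κ = ∅ then (1 : ℤ) else 0) =
      ∑ S ∈ G.edgeFinset.powerset, if S ⊆ mono κ then (-1 : ℤ) ^ #S else 0 := by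
    intro κ
    rw [← Finset.sum_powerset_neg_one_pow_card, ← Finset.sum_filter]
    apply Finset.sum_congr _ (fun _ _ => rfl)
    ext S
    simp only [mem_powerset, mem_filter]
    exact ⟨fun h => ⟨h.trans (filter_subset _ _), h⟩, fun h => h.2⟩
  rw [Finset.sum_congr rfl (fun κ _ => e3 κ), Finset.sum_comm]
  apply Finset.sum_congr rfl
  intro S _
  rw [← Finset.sum_filter, Finset.sum_const, nsmul_eq_mul, mul_comm]

/-- signed power sum coefficient -/
noncomputable def pcoef {V : Type*} [Fintype V] (G : SimpleGraph V) (l : Multiset ℕ) : ℤ :=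
  ∑ S ∈ G.edgeFinset.powerset with ctype S = l, (-1) ^ #S

lemma pcoef_eq {V W : Type*} [Fintype V] [Fintype W] (G : SimpleGraph V) (H : SimpleGraph W)
    (h : SameCSF G H) (l : Multiset ℕ) : pcoef G l = pcoef H l := by
  set Λ : Finset (Multiset ℕ) := G.edgeFinset.powerset.image ctype ∪
    H.edgeFinset.powerset.image ctype with hΛ
  have hout : ∀ l ∉ Λ, pcoef G l = pcoef H l := by
    intro l hl
    simp only [hΛ, mem_union, mem_image, not_or, not_exists, not_and] at hl
    unfold pcoef
    rw [Finset.filter_false_of_mem hl.1, Finset.filter_false_of_mem hl.2]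
    simp
  have hpos : ∀ l ∈ Λ, ∀ a ∈ l, 0 < a := by
    intro l hl
    simp only [hΛ, mem_union, mem_image] at hl
    rcases hl with ⟨S, _, rfl⟩ | ⟨S, _, rfl⟩ <;> exact ctype_pos S
  have hG : ∀ α : ℕ →₀ ℕ, ∑ S ∈ G.edgeFinset.powerset, (-1) ^ #S * (Mm (ctype S) α : ℤ) =
      ∑ m ∈ Λ, pcoef G m * Mm m α := by
    intro α
    rw [← Finset.sum_fiberwise_of_maps_to (g := ctype) (t := Λ)
      (fun S hS => mem_union_left _ (mem_image_of_mem _ hS))]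
    apply Finset.sum_congr rfl
    intro m _
    rw [pcoef, Finset.sum_mul]
    apply Finset.sum_congr rfl
    intro S hS
    rw [(mem_filter.1 hS).2]
  have hH : ∀ α : ℕ →₀ ℕ, ∑ S ∈ H.edgeFinset.powerset, (-1) ^ #S * (Mm (ctype S) α : ℤ) =
      ∑ m ∈ Λ, pcoef H m * Mm m α := by
    intro α
    rw [← Finset.sum_fiberwise_of_maps_to (g := ctype) (t := Λ)
      (fun S hS => mem_union_right _ (mem_image_of_mem _ hS))]
    apply Finset.sum_congr rfl
    intro m _
    rw [pcoef, Finset.sum_mul]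
    apply Finset.sum_congr rfl
    intro S hS
    rw [(mem_filter.1 hS).2]
  have hsum : ∀ α : ℕ →₀ ℕ, ∑ m ∈ Λ, (pcoef G m - pcoef H m) * Mm m α = 0 := by
    intro α
    simp only [sub_mul, Finset.sum_sub_distrib]
    rw [← hG, ← hH, ← card_proper, ← card_proper, h α, sub_self]
  -- bound on lengths, then downward induction
  obtain ⟨N, hN⟩ : ∃ N, ∀ m ∈ Λ, m.card ≤ N := ⟨Λ.sup Multiset.card, fun m hm => Finset.le_sup hm⟩
  have main : ∀ d, ∀ l : Multiset ℕ, N ≤ l.card + d → pcoef G l = pcoef H l := by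
    intro d
    induction d using Nat.strong_induction_on with
    | _ d ih =>
    intro l hl
    by_cases hm : l ∈ Λ
    swap
    · exact hout l hm
    obtain ⟨α, ha, hM⟩ := exists_content l (hpos l hm)
    have hl2 := (Mm_support l (hpos l hm) α hM).2 ha
    have hs := hsum α
    rw [Finset.sum_eq_single l] at hs
    · rw [mul_eq_zero] at hs
      rcases hs with hs | hs
      · exact sub_eq_zero.1 hs
      · exact absurd (by exact_mod_cast hs) hM
    · intro m hmΛ hne
      by_cases hz : Mm m α = 0
      · simp [hz]
      obtain ⟨h1, h2⟩ := Mm_support m (hpos m hmΛ) α hz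
      have hlt : l.card < m.card := by
        rw [ha] at h1 h2
        refine lt_of_le_of_ne h1 (fun hc => hne ?_)
        rw [← h2 hc, hl2]
      have hNm := hN m hmΛ
      rw [ih (d - 1) (by omega) m (by omega)]
      simp
    · intro hc; exact absurd hm hc
  exact main N l (by omega)

/-- The combinatorial data extracted from a crab. -/
structure CrabData {V : Type*} [Fintype V] (G : SimpleGraph V) where
  I : Finset V
  r : V → V
  hrI : ∀ v, r v ∈ I
  hfix : ∀ v ∈ I, r v = v
  hadj : ∀ v, v ∉ I → ∀ x, G.Adj v x ↔ x = r v
  w2 : ∀ u ∈ I, 2 ≤ #{v | r v = u}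
  winj : ∀ u ∈ I, ∀ v ∈ I, #{x | r x = u} = #{x | r x = v} → u = v

namespace CrabData
variable {V : Type*} [Fintype V] {G : SimpleGraph V} (D : CrabData G)

noncomputable def w (u : V) : ℕ := #{v | D.r v = u}

noncomputable def EL : Finset (Sym2 V) := ({v | v ∉ D.I} : Finset V).image (fun v => s(v, D.r v))

noncomputable def type1 : Multiset ℕ := D.I.val.map D.w

noncomputable def type2 (a b : V) : Multiset ℕ :=
  (D.w a + D.w b) ::ₘ ((D.I.erase b).erase a).val.map D.w

lemma mem_EL {v : V} (hv : v ∉ D.I) : s(v, D.r v) ∈ D.EL :=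
  mem_image.2 ⟨v, by simpa using hv, rfl⟩

lemma EL_sub : D.EL ⊆ G.edgeFinset := by
  intro e he
  obtain ⟨v, hv, rfl⟩ := mem_image.1 he
  simp only [mem_filter, mem_univ, true_and] at hv
  simpa using (D.hadj v hv _).2 rfl

lemma EL_not {a b : V} (ha : a ∈ D.I) (hb : b ∈ D.I) : s(a, b) ∉ D.EL := by
  intro he
  obtain ⟨v, hv, h⟩ := mem_image.1 he
  simp only [mem_filter, mem_univ, true_and] at hv
  rw [Sym2.eq_iff] at h
  rcases h with ⟨rfl, _⟩ | ⟨rfl, _⟩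
  · exact hv ha
  · exact hv hb

lemma inner_of_not {S : Finset (Sym2 V)} (hS : S ⊆ G.edgeFinset) {a b : V} (h : s(a, b) ∈ S)
    (hn : s(a, b) ∉ D.EL) : a ∈ D.I ∧ b ∈ D.I ∧ G.Adj a b := by
  have hab : G.Adj a b := by simpa using hS h
  refine ⟨?_, ?_, hab⟩
  · by_contra ha
    rw [(D.hadj a ha b).1 hab] at hn
    exact hn (D.mem_EL ha)
  · by_contra hb
    rw [(D.hadj b hb a).1 hab.symm, Sym2.eq_swap] at hn
    exact hn (D.mem_EL hb)

lemma EL_subset_of {S : Finset (Sym2 V)} (hS : S ⊆ G.edgeFinset) (h1 : 1 ∉ ctype S) :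
    D.EL ⊆ S := by
  intro e he
  obtain ⟨v, hv, rfl⟩ := mem_image.1 he
  simp only [mem_filter, mem_univ, true_and] at hv
  by_contra hn
  apply h1
  have hc := (const_iff S (fun x => (x = v : Prop))).2 (by
    intro x y hxy
    have hadj : G.Adj x y := by simpa using hS hxy
    apply propext
    constructor
    · rintro rfl
      rw [(D.hadj x hv y).1 hadj] at hxy
      exact absurd hxy hn
    · rintro rfl
      rw [(D.hadj y hv x).1 hadj.symm, Sym2.eq_swap] at hxy
      exact absurd hxy hn)
  simp only [ctype, ftype, Multiset.mem_map, mem_val]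
  refine ⟨_, mem_image_of_mem _ (mem_univ v), ?_⟩
  rw [Finset.card_eq_one]
  refine ⟨v, ?_⟩
  ext x
  simp only [mem_filter, mem_univ, true_and, mem_singleton]
  constructor
  · intro h
    exact (hc x v h).mpr rfl
  · rintro rfl; rfl

lemma card_le {S : Finset (Sym2 V)} (hEL : D.EL ⊆ S) (J : Finset V)
    (hJ : ∀ x ∈ D.I, ∃ y ∈ J, x = y ∨ s(x, y) ∈ S) : (ctype S).card ≤ #J := by
  unfold ctype ftype
  rw [Multiset.card_map]
  refine le_trans (Finset.card_le_card ?_) (Finset.card_image_le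
    (s := J) (f := (fromEdgeSet (S : Set (Sym2 V))).connectedComponentMk))
  have key := (const_iff S (fromEdgeSet (S : Set (Sym2 V))).connectedComponentMk).1
    (fun _ _ h => h)
  intro c hc
  obtain ⟨v, _, rfl⟩ := mem_image.1 hc
  obtain ⟨y, hy, h⟩ := hJ (D.r v) (D.hrI v)
  refine mem_image.2 ⟨y, hy, ?_⟩
  have h1 : (fromEdgeSet (S : Set (Sym2 V))).connectedComponentMk v =
      (fromEdgeSet (S : Set (Sym2 V))).connectedComponentMk (D.r v) := by
    by_cases hv : v ∈ D.I
    · rw [D.hfix v hv]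
    · exact key _ _ (hEL (D.mem_EL hv))
  rw [h1]
  rcases h with h | h
  · rw [h]
  · exact (key _ _ h).symm

lemma card_le1 {S : Finset (Sym2 V)} (hEL : D.EL ⊆ S) {a b : V} (ha : a ∈ D.I) (hb : b ∈ D.I)
    (hab : a ≠ b) (h : s(a, b) ∈ S) : (ctype S).card + 1 ≤ #D.I := by
  have := D.card_le hEL (D.I.erase b) (by
    intro x hx
    by_cases hxb : x = b
    · subst hxb
      exact ⟨a, mem_erase.2 ⟨hab, ha⟩, Or.inr (by rwa [Sym2.eq_swap])⟩
    · exact ⟨x, mem_erase.2 ⟨hxb, hx⟩, Or.inl rfl⟩)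
  have h2 := Finset.card_erase_add_one hb
  omega

lemma card_le2_aux {S : Finset (Sym2 V)} (hEL : D.EL ⊆ S) {x y c d : V} (hx : x ∈ D.I)
    (hy : y ∈ D.I) (hc : c ∈ D.I) (hd : d ∈ D.I) (hxy : x ≠ y) (hcd : c ≠ d) (hdx : d ≠ x)
    (hdy : d ≠ y) (hxc : x ≠ c) (h1 : s(x, y) ∈ S) (h2 : s(c, d) ∈ S) :
    (ctype S).card + 2 ≤ #D.I := by
  have := D.card_le hEL ((D.I.erase x).erase d) (by
    intro z hz
    by_cases hzx : z = x
    · subst hzx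
      exact ⟨y, by simp [hdy.symm, hxy.symm, hy], Or.inr h1⟩
    by_cases hzd : z = d
    · subst hzd
      exact ⟨c, by simp [hcd, hxc.symm, hc], Or.inr (by rwa [Sym2.eq_swap])⟩
    exact ⟨z, by simp [hzx, hzd, hz], Or.inl rfl⟩)
  have h2 := Finset.card_erase_add_one hx
  have h3 := Finset.card_erase_add_one (show d ∈ D.I.erase x by simp [hdx, hd])
  omega

lemma card_le2 {S : Finset (Sym2 V)} (hEL : D.EL ⊆ S) {a b c d : V} (ha : a ∈ D.I)
    (hb : b ∈ D.I) (hc : c ∈ D.I) (hd : d ∈ D.I) (hab : a ≠ b) (hcd : c ≠ d)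
    (h1 : s(a, b) ∈ S) (h2 : s(c, d) ∈ S) (hne : s(a, b) ≠ s(c, d)) :
    (ctype S).card + 2 ≤ #D.I := by
  have h1' : s(b, a) ∈ S := by rwa [Sym2.eq_swap]
  have h2' : s(d, c) ∈ S := by rwa [Sym2.eq_swap]
  have hne1 : ¬ (a = c ∧ b = d) := by rintro ⟨rfl, rfl⟩; exact hne rfl
  have hne2 : ¬ (a = d ∧ b = c) := by rintro ⟨rfl, rfl⟩; exact hne Sym2.eq_swap
  by_cases hd' : d = a ∨ d = b
  · have hc' : c ≠ a ∧ c ≠ b := by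
      constructor <;> rintro rfl <;> rcases hd' with rfl | rfl <;> simp_all
    by_cases hda : a = d
    · exact D.card_le2_aux hEL hb ha hd hc hab.symm hcd.symm hc'.2 hc'.1 (hda ▸ hab.symm) h1' h2'
    · exact D.card_le2_aux hEL ha hb hd hc hab hcd.symm hc'.1 hc'.2 hda h1 h2'
  · push Not at hd'
    by_cases hca : a = c
    · exact D.card_le2_aux hEL hb ha hc hd hab.symm hcd hd'.2 hd'.1 (hca ▸ hab.symm) h1' h2
    · exact D.card_le2_aux hEL ha hb hc hd hab hcd hd'.1 hd'.2 hca h1 h2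

lemma classify {S : Finset (Sym2 V)} (hS : S ⊆ G.edgeFinset) (h1 : 1 ∉ ctype S)
    (hc : #D.I ≤ (ctype S).card + 1) :
    S = D.EL ∨ (∃ a ∈ D.I, ∃ b ∈ D.I, G.Adj a b ∧ S = insert s(a, b) D.EL) ∧
      (ctype S).card + 1 ≤ #D.I := by
  have hEL := D.EL_subset_of hS h1
  by_cases hE : S = D.EL
  · exact Or.inl hE
  right
  obtain ⟨e, he, hne⟩ : ∃ e ∈ S, e ∉ D.EL := by
    by_contra! h
    exact hE (Finset.Subset.antisymm h hEL)
  induction e using Sym2.ind with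
  | _ a b =>
  obtain ⟨ha, hb, hab⟩ := D.inner_of_not hS he hne
  refine ⟨⟨a, ha, b, hb, hab, ?_⟩, D.card_le1 hEL ha hb hab.ne he⟩
  apply Finset.Subset.antisymm
  · intro f hf
    by_contra hfn
    rw [mem_insert, not_or] at hfn
    induction f using Sym2.ind with
    | _ c d =>
    obtain ⟨hc, hd, hcd⟩ := D.inner_of_not hS hf hfn.2
    have := D.card_le2 hEL ha hb hc hd hab.ne hcd.ne he hf (Ne.symm hfn.1)
    omega
  · exact insert_subset he hEL

lemma ctype_of {S : Finset (Sym2 V)} (f : V → V) (hf : ∀ x y, s(x, y) ∈ S → f x = f y)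
    (hr : ∀ x, (fromEdgeSet (S : Set (Sym2 V))).connectedComponentMk x =
      (fromEdgeSet (S : Set (Sym2 V))).connectedComponentMk (f x)) : ctype S = ftype f := by
  apply ftype_congr
  intro x y
  constructor
  · exact (const_iff S f).2 hf x y
  · intro h
    rw [hr x, hr y, h]

lemma r_EL {x y : V} (h : s(x, y) ∈ D.EL) : D.r x = D.r y := by
  obtain ⟨v, hv, h⟩ := mem_image.1 h
  rw [Sym2.eq_iff] at h
  have := D.hfix _ (D.hrI v)
  rcases h with ⟨rfl, rfl⟩ | ⟨rfl, rfl⟩ <;> simp [this]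

lemma mk_r {S : Finset (Sym2 V)} (hEL : D.EL ⊆ S) (x : V) :
    (fromEdgeSet (S : Set (Sym2 V))).connectedComponentMk x =
      (fromEdgeSet (S : Set (Sym2 V))).connectedComponentMk (D.r x) := by
  by_cases hv : x ∈ D.I
  · rw [D.hfix x hv]
  · exact (const_iff S (fromEdgeSet (S : Set (Sym2 V))).connectedComponentMk).1
      (fun _ _ h => h) _ _ (hEL (D.mem_EL hv))

lemma ctype_EL : ctype D.EL = D.type1 := by
  rw [ctype_of D.r (fun x y h => D.r_EL h) (D.mk_r (Finset.Subset.refl _))]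
  unfold ftype type1
  have : univ.image D.r = D.I := by
    ext v
    simp only [mem_image, mem_univ, true_and]
    exact ⟨by rintro ⟨x, rfl⟩; exact D.hrI x, fun h => ⟨v, D.hfix v h⟩⟩
  rw [this]
  rfl

lemma ctype_insert {a b : V} (ha : a ∈ D.I) (hb : b ∈ D.I) (hab : a ≠ b) :
    ctype (insert s(a, b) D.EL) = D.type2 a b := by
  rw [ctype_of (fun x => if D.r x = b then a else D.r x)]
  · have him : univ.image (fun x => if D.r x = b then a else D.r x) = D.I.erase b := by
      ext v
      simp only [mem_image, mem_univ, true_and, mem_erase]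
      constructor
      · rintro ⟨x, rfl⟩
        split_ifs with h
        · exact ⟨hab, ha⟩
        · exact ⟨h, D.hrI x⟩
      · rintro ⟨h1, h2⟩
        exact ⟨v, by rw [D.hfix v h2, if_neg h1]⟩
    unfold ftype type2
    rw [him]
    conv_lhs => rw [← Finset.insert_erase (show a ∈ D.I.erase b by simp [hab, ha])]
    rw [Finset.insert_val_of_notMem (by simp), Multiset.map_cons]
    congr 1
    · unfold w
      rw [← Finset.card_union_of_disjoint]
      · congr 1
        ext v
        simp only [mem_filter, mem_univ, true_and, mem_union]
        split_ifs with h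
        · simp [h]
        · simp [h]
      · rw [Finset.disjoint_filter]
        intro x _ h h'
        exact hab (h ▸ h')
    · apply Multiset.map_congr rfl
      intro c hc
      simp only [mem_val, mem_erase] at hc
      unfold w
      congr 1
      ext v
      simp only [mem_filter, mem_univ, true_and]
      split_ifs with h
      · rw [h]
        exact ⟨fun h => absurd h.symm hc.1, fun h => absurd h.symm hc.2.1⟩
      · rfl
  · intro x y hxy
    rw [mem_insert] at hxy
    rcases hxy with h | h
    · rw [Sym2.eq_iff] at h
      rcases h with ⟨rfl, rfl⟩ | ⟨rfl, rfl⟩ <;> simp [D.hfix _ ha, D.hfix _ hb]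
    · rw [D.r_EL h]
  · intro x
    have h1 := D.mk_r (Finset.subset_insert s(a, b) D.EL) x
    split_ifs with h
    · rw [h1, h]
      exact (const_iff (insert s(a, b) D.EL) (fromEdgeSet (_ : Set (Sym2 V))).connectedComponentMk).1
        (fun _ _ h => h) _ _ (by rw [Sym2.eq_swap]; exact mem_insert_self _ _)
    · exact h1

lemma type1_eq {a b : V} (ha : a ∈ D.I) (hb : b ∈ D.I) (hab : a ≠ b) :
    D.type1 = D.w a ::ₘ D.w b ::ₘ ((D.I.erase b).erase a).val.map D.w := by
  unfold type1
  conv_lhs => rw [← Finset.insert_erase hb,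
    ← Finset.insert_erase (show a ∈ D.I.erase b by simp [hab, ha])]
  rw [Finset.insert_val_of_notMem (by simp [hab.symm]), Multiset.map_cons,
    Finset.insert_val_of_notMem (by simp), Multiset.map_cons, Multiset.cons_swap]

lemma one_type1 : 1 ∉ D.type1 := by
  intro h
  simp only [type1, Multiset.mem_map, mem_val] at h
  obtain ⟨u, hu, h⟩ := h
  have := D.w2 u hu
  simp only [w] at h
  omega

lemma one_type2 {a b : V} (ha : a ∈ D.I) (hb : b ∈ D.I) : 1 ∉ D.type2 a b := by
  intro h
  simp only [type2, Multiset.mem_cons, Multiset.mem_map, mem_val, mem_erase] at h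
  have h1 : 2 ≤ D.w a := D.w2 a ha
  rcases h with h | ⟨u, hu, h⟩
  · omega
  · have : 2 ≤ D.w u := D.w2 u hu.2.2
    omega

lemma card_type1 : D.type1.card = #D.I := by simp [type1]

lemma card_type2 {a b : V} (ha : a ∈ D.I) (hb : b ∈ D.I) (hab : a ≠ b) :
    (D.type2 a b).card + 1 = #D.I := by
  rw [← D.card_type1, D.type1_eq ha hb hab]
  simp [type2]

lemma pcoef_type1 : pcoef G D.type1 ≠ 0 := by
  have : (G.edgeFinset.powerset.filter (fun S => ctype S = D.type1)) = {D.EL} := by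
    ext S
    simp only [mem_filter, mem_powerset, mem_singleton]
    constructor
    · rintro ⟨hS, hc⟩
      have hcard : (ctype S).card = #D.I := by rw [hc, D.card_type1]
      rcases D.classify hS (hc ▸ D.one_type1) (by omega) with h | h
      · exact h
      · omega
    · rintro rfl
      exact ⟨D.EL_sub, D.ctype_EL⟩
  rw [pcoef, this, Finset.sum_singleton]
  exact pow_ne_zero _ (by norm_num)

end CrabData

lemma exists_of_pcoef {V : Type*} [Fintype V] {G : SimpleGraph V} {l : Multiset ℕ}
    (h : pcoef G l ≠ 0) : ∃ S ⊆ G.edgeFinset, ctype S = l := by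
  obtain ⟨S, hS, _⟩ := Finset.exists_ne_zero_of_sum_ne_zero h
  rw [mem_filter, mem_powerset] at hS
  exact ⟨S, hS.1, hS.2⟩

lemma type2_recover {V W : Type*} [Fintype V] [Fintype W] {G : SimpleGraph V} {H : SimpleGraph W}
    (D : CrabData G) (E : CrabData H) (h1 : D.type1 = E.type1) {a b : V} {c d : W}
    (ha : a ∈ D.I) (hb : b ∈ D.I) (hab : a ≠ b) (hc : c ∈ E.I) (hd : d ∈ E.I) (hcd : c ≠ d)
    (h : D.type2 a b = E.type2 c d) :
    (D.w a = E.w c ∧ D.w b = E.w d) ∨ (D.w a = E.w d ∧ D.w b = E.w c) := by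
  rw [D.type1_eq ha hb hab, E.type1_eq hc hd hcd] at h1
  unfold CrabData.type2 at h
  have hwab : D.w a ≠ D.w b := fun hh => hab (D.winj a ha b hb hh)
  have pa : 2 ≤ D.w a := D.w2 a ha
  have pb : 2 ≤ D.w b := D.w2 b hb
  generalize ((D.I.erase b).erase a).val.map D.w = R at *
  generalize ((E.I.erase d).erase c).val.map E.w = R' at *
  have key : (D.w a ::ₘ D.w b ::ₘ {E.w c + E.w d} : Multiset ℕ) =
      E.w c ::ₘ E.w d ::ₘ {D.w a + D.w b} := by
    have hs := congrArg₂ (· + ·) h1 h.symm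
    simp only [← Multiset.singleton_add] at hs ⊢
    apply add_right_cancel (b := R + R')
    calc _ = {D.w a} + ({D.w b} + R) + ({E.w c + E.w d} + R') := by abel
      _ = _ := by rw [hs]; abel
  have ma : D.w a ∈ (E.w c ::ₘ E.w d ::ₘ {D.w a + D.w b} : Multiset ℕ) := by
    rw [← key]; simp
  have mb : D.w b ∈ (E.w c ::ₘ E.w d ::ₘ {D.w a + D.w b} : Multiset ℕ) := by
    rw [← key]; simp
  simp only [Multiset.mem_cons, Multiset.mem_singleton] at ma mb
  omega

namespace CrabData
variable {V : Type*} [Fintype V] {G : SimpleGraph V} (D : CrabData G)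

lemma pcoef_type2 {a b : V} (ha : a ∈ D.I) (hb : b ∈ D.I) (hab : G.Adj a b) :
    pcoef G (D.type2 a b) ≠ 0 := by
  have hcard := D.card_type2 ha hb hab.ne
  have : (G.edgeFinset.powerset.filter (fun S => ctype S = D.type2 a b)) =
      {insert s(a, b) D.EL} := by
    ext S
    simp only [mem_filter, mem_powerset, mem_singleton]
    constructor
    · rintro ⟨hS, hc⟩
      rcases D.classify hS (hc ▸ D.one_type2 ha hb) (by rw [hc]; omega) with h | h
      · rw [h, D.ctype_EL] at hc
        rw [← hc, D.card_type1] at hcard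
        omega
      · obtain ⟨⟨c, hc1, d, hd1, hcd, rfl⟩, _⟩ := h
        rw [D.ctype_insert hc1 hd1 hcd.ne] at hc
        rcases type2_recover D D rfl hc1 hd1 hcd.ne ha hb hab.ne hc with ⟨h1, h2⟩ | ⟨h1, h2⟩
        · rw [D.winj c hc1 a ha h1, D.winj d hd1 b hb h2]
        · rw [D.winj c hc1 b hb h1, D.winj d hd1 a ha h2, Sym2.eq_swap]
    · rintro rfl
      refine ⟨insert_subset (by simpa using hab) D.EL_sub, D.ctype_insert ha hb hab.ne⟩
  rw [pcoef, this, Finset.sum_singleton]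
  exact pow_ne_zero _ (by norm_num)

lemma of_pcoef1 {l : Multiset ℕ} (h : pcoef G l ≠ 0) (h1 : 1 ∉ l) :
    l.card ≤ #D.I ∧ (l.card = #D.I → l = D.type1) := by
  obtain ⟨S, hS, rfl⟩ := exists_of_pcoef h
  by_cases hc : #D.I ≤ (ctype S).card + 1
  · rcases D.classify hS h1 hc with h | h
    · rw [h, D.ctype_EL]
      exact ⟨D.card_type1.le, fun _ => rfl⟩
    · constructor <;> intros <;> omega
  · constructor <;> intros <;> omega

lemma of_pcoef2 {l : Multiset ℕ} (h : pcoef G l ≠ 0) (h1 : 1 ∉ l) (hc : l.card + 1 = #D.I) :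
    ∃ a ∈ D.I, ∃ b ∈ D.I, G.Adj a b ∧ l = D.type2 a b := by
  obtain ⟨S, hS, rfl⟩ := exists_of_pcoef h
  rcases D.classify hS h1 hc.ge with h | h
  · rw [h, D.ctype_EL, D.card_type1] at hc
    omega
  · obtain ⟨⟨a, ha, b, hb, hab, rfl⟩, _⟩ := h
    exact ⟨a, ha, b, hb, hab, D.ctype_insert ha hb hab.ne⟩

/-- adjacency of inner vertices, through weights -/
def P (x y : ℕ) : Prop := ∃ a ∈ D.I, ∃ b ∈ D.I, G.Adj a b ∧ D.w a = x ∧ D.w b = y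

noncomputable def label (v : V) : ℕ × Prop := (D.w (D.r v), v ∈ D.I)

lemma adj_iff (u v : V) : G.Adj u v ↔
    ((D.label u).2 ∧ (D.label v).2 ∧ D.P (D.label u).1 (D.label v).1) ∨
    (¬ (D.label u).2 ∧ (D.label v).2 ∧ (D.label u).1 = (D.label v).1) ∨
    ((D.label u).2 ∧ ¬ (D.label v).2 ∧ (D.label u).1 = (D.label v).1) := by
  simp only [label]
  have hw : ∀ {a b}, a ∈ D.I → b ∈ D.I → (D.w a = D.w b ↔ a = b) :=
    fun ha hb => ⟨D.winj _ ha _ hb, fun h => by rw [h]⟩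
  by_cases hu : u ∈ D.I <;> by_cases hv : v ∈ D.I
  · simp only [hu, hv, D.hfix, not_true_eq_false, true_and, false_and, or_false]
    constructor
    · exact fun h => ⟨u, hu, v, hv, h, rfl, rfl⟩
    · rintro ⟨a, ha, b, hb, hab, h1, h2⟩
      rwa [← (hw ha hu).1 h1, ← (hw hb hv).1 h2]
  · simp only [hu, hv, false_and, true_and, and_false, not_false_eq_true, not_true_eq_false, false_or]
    rw [G.adj_comm, D.hadj v hv, D.hfix u hu, hw hu (D.hrI v)]
  · simp only [hu, hv, false_and, true_and, not_false_eq_true, not_true_eq_false, false_or,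
      or_false]
    rw [D.hadj u hu, D.hfix v hv, hw (D.hrI u) hv, eq_comm]
  · simp only [hu, hv, false_and, and_false, or_false, iff_false]
    rw [D.hadj u hu]
    rintro rfl
    exact hv (D.hrI u)

lemma label_count (c : ℕ × Prop) : #{v | D.label v = c} =
    if c.1 ∈ D.type1 then (if c.2 then 1 else c.1 - 1) else 0 := by
  obtain ⟨x, t⟩ := c
  simp only [label, Prod.mk.injEq]
  split_ifs with h1 ht
  · simp only [type1, Multiset.mem_map, mem_val] at h1
    obtain ⟨u, hu, rfl⟩ := h1
    rw [Finset.card_eq_one]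
    refine ⟨u, ?_⟩
    ext v
    simp only [mem_filter, mem_univ, true_and, mem_singleton, ht, eq_iff_iff, iff_true]
    constructor
    · rintro ⟨h, hv⟩
      rw [D.hfix v hv] at h
      exact D.winj v hv u hu h
    · rintro rfl
      exact ⟨by rw [D.hfix v hu], hu⟩
  · simp only [type1, Multiset.mem_map, mem_val] at h1
    obtain ⟨u, hu, rfl⟩ := h1
    conv_rhs => rw [w]
    rw [← Finset.card_erase_of_mem (a := u) (by simp [D.hfix u hu])]
    congr 1
    ext v
    simp only [mem_filter, mem_univ, true_and, mem_erase, ht, eq_iff_iff, iff_false]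
    constructor
    · rintro ⟨h, hv⟩
      exact ⟨fun h => hv (h ▸ hu), D.winj _ (D.hrI v) u hu h⟩
    · rintro ⟨h, hv⟩
      refine ⟨by rw [hv], fun h' => h ?_⟩
      rw [← hv, D.hfix v h']
  · rw [Finset.card_eq_zero, Finset.filter_eq_empty_iff]
    rintro v _ ⟨rfl, _⟩
    exact h1 (Multiset.mem_map_of_mem _ (D.hrI v))

end CrabData

lemma P_le {V W : Type*} [Fintype V] [Fintype W] {G : SimpleGraph V} {H : SimpleGraph W}
    (D : CrabData G) (E : CrabData H) (h1 : D.type1 = E.type1) (h : SameCSF G H) {x y : ℕ}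
    (hP : D.P x y) : E.P x y := by
  obtain ⟨a, ha, b, hb, hab, rfl, rfl⟩ := hP
  have hp := D.pcoef_type2 ha hb hab
  rw [pcoef_eq G H h] at hp
  have hI : #D.I = #E.I := by rw [← D.card_type1, ← E.card_type1, h1]
  obtain ⟨c, hc, d, hd, hcd, ht⟩ := E.of_pcoef2 hp (D.one_type2 ha hb)
    (by rw [D.card_type2 ha hb hab.ne, hI])
  rcases type2_recover D E h1 ha hb hab.ne hc hd hcd.ne ht with ⟨h1, h2⟩ | ⟨h1, h2⟩
  · exact ⟨c, hc, d, hd, hcd, h1.symm, h2.symm⟩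
  · exact ⟨d, hd, c, hc, hcd.symm, h1.symm, h2.symm⟩

lemma iso_of_data {V W : Type*} [Fintype V] [Fintype W] {G : SimpleGraph V} {H : SimpleGraph W}
    (D : CrabData G) (E : CrabData H) (h : SameCSF G H) : Nonempty (G ≃g H) := by
  have h' : SameCSF H G := fun α => (h α).symm
  have h1 : D.type1 = E.type1 := by
    have a1 := E.of_pcoef1 (pcoef_eq G H h _ ▸ D.pcoef_type1) D.one_type1
    have a2 := D.of_pcoef1 (pcoef_eq G H h _ ▸ E.pcoef_type1) E.one_type1
    rw [D.card_type1] at a1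
    rw [E.card_type1] at a2
    exact a1.2 (le_antisymm a1.1 a2.1)
  have hP : D.P = E.P := by
    funext x y
    exact propext ⟨P_le D E h1 h, P_le E D h1.symm h'⟩
  obtain ⟨e, he⟩ := exists_equiv_of_map_eq D.label E.label (by
    intro c
    have a1 := D.label_count c
    have a2 := E.label_count c
    rw [h1] at a1
    convert a1.trans a2.symm)
  refine ⟨⟨e, ?_⟩⟩
  intro u v
  rw [E.adj_iff, D.adj_iff, he, he, hP]

lemma crab_data {V : Type*} [Fintype V] (G : SimpleGraph V) [DecidableRel G.Adj]
    (hG : IsCrab G) (hbig : ∀ v : V, G.degree v ≠ 1 → 2 < G.degree v)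
    (hdist : ∀ v w : V, G.degree v ≠ 1 → G.degree w ≠ 1 →
      G.degree v = G.degree w → v = w) : Nonempty (CrabData G) := by
  obtain ⟨hconn, hedge, hcyc⟩ := hG
  have hleaf : ∀ v, G.degree v = 1 → ∃! x, G.Adj v x :=
    fun v h => degree_eq_one_iff_existsUnique_adj.1 h
  have hsum : ∑ v, G.degree v = 2 * Fintype.card V := by
    rw [sum_degrees_eq_twice_card_edges, ← hedge, Nat.card_eq_fintype_card, ← edgeFinset_card]
  have hne : Nonempty V := hconn.nonempty
  have hnl : ∀ u v, G.Adj u v → G.degree u = 1 → G.degree v ≠ 1 := by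
    intro u v huv hu hv
    have hall : ∀ x, G.Reachable u x → x = u ∨ x = v := by
      intro x hx
      rw [reachable_iff_reflTransGen] at hx
      induction hx with
      | refl => exact Or.inl rfl
      | tail _ hadj ih =>
        rcases ih with rfl | rfl
        · exact Or.inr ((hleaf _ hu).unique hadj huv)
        · exact Or.inl ((hleaf _ hv).unique hadj huv.symm)
    have : ∑ v, G.degree v = ∑ v : V, 1 := by
      apply Finset.sum_congr rfl
      intro x _
      rcases hall x (hconn.preconnected u x) with rfl | rfl <;> assumption
    rw [hsum] at this
    simp at this
  have hcycdeg : ∀ v (c : G.Walk v v), c.IsCycle → ∀ x ∈ c.support, G.degree x ≠ 1 := by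
    intro v c hc x hx h1
    have hc' := hc.rotate hx
    exact hc'.snd_ne_penultimate ((hleaf x h1).unique (Walk.adj_snd hc'.not_nil)
      (Walk.adj_penultimate hc'.not_nil).symm)
  set I : Finset V := {v | G.degree v ≠ 1} with hI
  have memI : ∀ v, v ∈ I ↔ G.degree v ≠ 1 := by simp [hI]
  have hinner : ∀ v ∈ I, 2 ≤ #{x ∈ G.neighborFinset v | x ∈ I} := by
    intro v hv
    obtain ⟨c, hc⟩ : ∃ c : G.Walk v v, c.IsCycle := by
      by_contra h
      exact (memI v).1 hv (hcyc v h)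
    rw [← Finset.card_pair hc.snd_ne_penultimate]
    apply Finset.card_le_card
    intro x hx
    rw [mem_insert, mem_singleton] at hx
    rw [mem_filter, mem_neighborFinset, memI]
    rcases hx with rfl | rfl
    · exact ⟨Walk.adj_snd hc.not_nil, hcycdeg v c hc _ (Walk.getVert_mem_support _ _)⟩
    · exact ⟨(Walk.adj_penultimate hc.not_nil).symm,
        hcycdeg v c hc _ (Walk.getVert_mem_support _ _)⟩
  have hr : ∀ v, ∃ y, (v ∈ I → y = v) ∧ (v ∉ I → ∀ x, G.Adj v x ↔ x = y) ∧ y ∈ I := by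
    intro v
    by_cases hv : v ∈ I
    · exact ⟨v, fun _ => rfl, fun h => absurd hv h, hv⟩
    · have h1 : G.degree v = 1 := by
        by_contra h; exact hv ((memI v).2 h)
      obtain ⟨y, hy, huniq⟩ := hleaf v h1
      refine ⟨y, fun h => absurd h hv, fun _ x => ⟨huniq x, ?_⟩, (memI y).2 (hnl v y hy h1)⟩
      rintro rfl; exact hy
  choose r hr1 hr2 hr3 using hr
  have hw : ∀ u ∈ I, #{v | r v = u} + #{x ∈ G.neighborFinset u | x ∈ I} = G.degree u + 1 := by
    intro u hu
    have e1 : ({v | r v = u} : Finset V) = insert u {x ∈ G.neighborFinset u | x ∉ I} := by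
      ext v
      simp only [mem_filter, mem_univ, true_and, mem_insert, mem_neighborFinset]
      constructor
      · rintro h
        by_cases hv : v ∈ I
        · left; rw [← h, hr1 v hv]
        · right; exact ⟨((hr2 v hv u).2 h.symm).symm, hv⟩
      · rintro (rfl | ⟨h, hv⟩)
        · exact hr1 v hu
        · exact ((hr2 v hv u).1 h.symm).symm
    rw [e1, Finset.card_insert_of_notMem (by simp), ← card_neighborFinset_eq_degree,
      ← Finset.card_filter_add_card_filter_not (s := G.neighborFinset u) (· ∈ I)]
    omega
  have hn : Fintype.card V = ∑ u ∈ I, #{v | r v = u} := by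
    rw [← Finset.card_univ]
    exact Finset.card_eq_sum_card_fiberwise (fun v _ => hr3 v)
  have hdeg : ∑ u ∈ I, G.degree u + #Iᶜ = 2 * Fintype.card V := by
    rw [← hsum, ← Finset.sum_add_sum_compl I]
    congr 1
    rw [Finset.card_eq_sum_ones]
    apply Finset.sum_congr rfl
    intro x hx
    rw [mem_compl, memI, not_not] at hx
    exact hx.symm
  have hIc := Finset.card_add_card_compl I
  have hs := Finset.sum_congr rfl hw
  rw [Finset.sum_add_distrib, Finset.sum_add_distrib, ← hn] at hs
  simp only [sum_const, smul_eq_mul, mul_one] at hs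
  have heq : ∑ u ∈ I, 2 = ∑ u ∈ I, #{x ∈ G.neighborFinset u | x ∈ I} := by
    simp only [sum_const, smul_eq_mul]
    omega
  have h2 := (Finset.sum_eq_sum_iff_of_le hinner).1 heq
  have hw' : ∀ u ∈ I, #{v | r v = u} + 1 = G.degree u := by
    intro u hu
    have a1 := hw u hu
    have a2 := h2 u hu
    omega
  refine ⟨⟨I, r, hr3, hr1, hr2, ?_, ?_⟩⟩
  · intro u hu
    have a1 := hw' u hu
    have a2 := hbig u ((memI u).1 hu)
    omega
  · intro u hu v hv h
    apply hdist u v ((memI u).1 hu) ((memI v).1 hv)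
    rw [← hw' u hu, ← hw' v hv, h]

end CrabProof


/-- Let `G` and `H` be crabs in which the degrees of the non-leaf vertices are pairwise
distinct and all greater than 2.  If `G` and `H` have equal chromatic symmetric functions,
then they are isomorphic. -/
theorem stmt_19 [Fintype V] [Fintype W] (G : SimpleGraph V) (H : SimpleGraph W)
    [DecidableRel G.Adj] [DecidableRel H.Adj]
    (hG : IsCrab G) (hH : IsCrab H)
    (hGbig : ∀ v : V, G.degree v ≠ 1 → 2 < G.degree v)
    (hGdist : ∀ v w : V, G.degree v ≠ 1 → G.degree w ≠ 1 →
      G.degree v = G.degree w → v = w)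
    (hHbig : ∀ v : W, H.degree v ≠ 1 → 2 < H.degree v)
    (hHdist : ∀ v w : W, H.degree v ≠ 1 → H.degree w ≠ 1 →
      H.degree v = H.degree w → v = w)
    (hX : SameCSF G H) :
    Nonempty (G ≃g H) := by
  obtain ⟨D⟩ := crab_data G hG hGbig hGdist
  obtain ⟨E⟩ := crab_data H hH hHbig hHdist
  exact iso_of_data D E hX
end
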